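/- arXiv:2205.10749 — 2 statements merged into one kernel-verified Lean document; each statement's English description precedes it below -/
import Mathlib

section
/- There exists an absolute constant γ₀ > 0 such that for every constant ε ∈ (0,1) there exists m₀ such that for all m ≥ m₀, all r with 1 ≤ r ≤ γ₀·m, and all integers i with 2 ≤ i ≤ r-1 the following holds. Set K = ⌊(1-ε)·binom(m,≤r)⌋, δ = binom(m,≤r)^{-2}, and let L_i be the number of polynomials P ∈ RM(m,r) with 2^{-(i+1)} ≤ wt(P) ≤ 2^{-i}. Then L_i · (1 - 2^{-(i+1)})^K / 2^{binom(m,≤r) - K} ≤ δ³. -/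
/-- `binomLe m r = ∑_{i=0}^r C(m,i)`, written `binom(m, ≤ r)`. -/
def binomLe (m r : ℕ) : ℕ := ∑ i ∈ Finset.range (r + 1), Nat.choose m i

/-- Index type for multilinear monomials of degree at most `r` in `m` variables:
subsets `S ⊆ {1,…,m}` with `|S| ≤ r`. -/
abbrev MonIdx (m r : ℕ) := {S : Finset (Fin m) // S.card ≤ r}

/-- `RM(m,r)` as the space of coefficient vectors of multilinear polynomials in `m`
variables of total degree at most `r` over `F₂`. -/
abbrev RMcode (m r : ℕ) := MonIdx m r → ZMod 2

/-- Evaluation of a polynomial (given by its coefficients) at the point `z`,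
as a linear map: `c ↦ ∑_{|S| ≤ r} c_S ∏_{i ∈ S} z_i`. -/
def evalLin (m r : ℕ) (z : Fin m → ZMod 2) : RMcode m r →ₗ[ZMod 2] ZMod 2 :=
  ∑ S : MonIdx m r, (∏ i ∈ S.1, z i) • LinearMap.proj S

/-- The degree-`r` vanishing space `I_r(Z)` of the set `Z ⊆ F₂^m`. -/
def vanishing (m r : ℕ) (Z : Set (Fin m → ZMod 2)) : Submodule (ZMod 2) (RMcode m r) :=
  ⨅ z ∈ Z, LinearMap.ker (evalLin m r z)

/-- The vector `z^{(r)}` of evaluations at `z` of all multilinear monomials of degree `≤ r`. -/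
def monVec (m r : ℕ) (z : Fin m → ZMod 2) : MonIdx m r → ZMod 2 := fun S => ∏ i ∈ S.1, z i

/-- Fractional Hamming weight of the polynomial with coefficients `c`. -/
noncomputable def wt (m r : ℕ) (c : RMcode m r) : ℝ :=
  ((Finset.univ.filter (fun z : Fin m → ZMod 2 => evalLin m r z c ≠ 0)).card : ℝ) / 2 ^ m

/-- The number of zeros in `F₂^m` of the polynomial with coefficients `c`,
i.e. `(1 - wt(P)) · 2^m`. -/
def numZeros (m r : ℕ) (c : RMcode m r) : ℕ :=
  (Finset.univ.filter (fun z : Fin m → ZMod 2 => evalLin m r z c = 0)).card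

/-- The degree-`r` closure of `Z ⊆ F₂^m`. -/
def closureSet (m r : ℕ) (Z : Set (Fin m → ZMod 2)) : Set (Fin m → ZMod 2) :=
  {u | ∀ c ∈ vanishing m r Z, evalLin m r u c = 0}

namespace ReedMuller

/-- The Boolean cube `F₂^m`. -/
abbrev Cube (m : ℕ) := Fin m → ZMod 2

lemma card_cube (m : ℕ) : Fintype.card (Cube m) = 2 ^ m := by simp [Cube, ZMod.card]

/-- The multilinear monomial `∏_{i ∈ S} z_i` as a function on the cube. -/
def monomialFun (m : ℕ) (S : Finset (Fin m)) : Cube m → ZMod 2 := fun z => ∏ i ∈ S, z i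

/-- The exponent sets of the multilinear monomials of degree less than `d`. -/
def lowSets (m d : ℕ) : Finset (Finset (Fin m)) := Finset.univ.filter fun S => S.card < d

/-- The space of functions on the cube of degree less than `d`. -/
def degLT (m d : ℕ) : Submodule (ZMod 2) (Cube m → ZMod 2) :=
  Submodule.span (ZMod 2) ((lowSets m d).image (monomialFun m) : Finset (Cube m → ZMod 2))

lemma card_lowSets (m d : ℕ) : (lowSets m d).card = ∑ i ∈ Finset.range d, m.choose i := by
  rw [lowSets, Finset.card_eq_sum_card_fiberwise (f := Finset.card) (t := Finset.range d)]
  · refine Finset.sum_congr rfl fun i hi => ?_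
    rw [Finset.filter_filter]
    have h : (Finset.univ.filter fun S : Finset (Fin m) => S.card < d ∧ S.card = i)
        = Finset.powersetCard i Finset.univ := by
      ext S
      simp only [Finset.mem_filter, Finset.mem_univ, true_and, Finset.mem_powersetCard,
        Finset.subset_univ]
      have := Finset.mem_range.1 hi
      omega
    rw [h, Finset.card_powersetCard, Finset.card_univ, Fintype.card_fin]
  · intro S hS
    simpa using hS

lemma card_degLT_le (m d : ℕ) :
    Nat.card (degLT m d) ≤ 2 ^ ∑ i ∈ Finset.range d, m.choose i := by
  rw [Module.natCard_eq_pow_finrank (K := ZMod 2), Nat.card_zmod]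
  refine Nat.pow_le_pow_right two_pos ?_
  rw [← card_lowSets]
  exact (finrank_span_finset_le_card _).trans Finset.card_image_le

/-- The discrete derivative in direction `y`. -/
def diff {m : ℕ} (y : Cube m) : (Cube m → ZMod 2) →ₗ[ZMod 2] (Cube m → ZMod 2) where
  toFun f x := f (x + y) - f x
  map_add' f g := by
    ext x
    simp only [Pi.add_apply]
    ring
  map_smul' a f := by
    ext x
    simp only [Pi.smul_apply, smul_eq_mul, RingHom.id_apply]
    ring

lemma monomialFun_mem_degLT {m d : ℕ} {S : Finset (Fin m)} (hS : S.card < d) :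
    monomialFun m S ∈ degLT m d :=
  Submodule.subset_span (by
    simp only [Finset.coe_image]
    exact ⟨S, by simpa [lowSets] using hS, rfl⟩)

lemma diff_mem_degLT {m d : ℕ} (y : Cube m) {f : Cube m → ZMod 2} (hf : f ∈ degLT m d) :
    diff y f ∈ degLT m (d - 1) := by
  suffices h : degLT m d ≤ (degLT m (d - 1)).comap (diff y) from h hf
  refine Submodule.span_le.2 ?_
  intro g hg
  simp only [Finset.coe_image] at hg
  obtain ⟨S, hS, rfl⟩ := hg
  have hS : S.card < d := by simpa [lowSets] using hS
  have key : diff y (monomialFun m S)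
      = ∑ T ∈ S.powerset.erase S, (∏ i ∈ S \ T, y i) • monomialFun m T := by
    ext x
    have h := Finset.prod_add (fun i => x i) (fun i => y i) S
    rw [← Finset.add_sum_erase _ _ (Finset.mem_powerset_self S)] at h
    simp only [Finset.sdiff_self, Finset.prod_empty, mul_one] at h
    simp only [diff, LinearMap.coe_mk, AddHom.coe_mk, monomialFun, Pi.add_apply, Finset.sum_apply,
      Pi.smul_apply, smul_eq_mul]
    rw [h, add_sub_cancel_left]
    exact Finset.sum_congr rfl fun T _ => mul_comm _ _
  change diff y (monomialFun m S) ∈ degLT m (d - 1)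
  rw [key]
  refine Submodule.sum_mem _ fun T hT => Submodule.smul_mem _ _ (monomialFun_mem_degLT ?_)
  rw [Finset.mem_erase, Finset.mem_powerset] at hT
  have := Finset.card_lt_card (hT.2.ssubset_of_ne hT.1)
  omega

/-- The number of points at which `f` does not vanish. -/
def supp {m : ℕ} (f : Cube m → ZMod 2) : ℕ := (Finset.univ.filter fun x => f x ≠ 0).card

lemma card_translate_ne_zero {m : ℕ} (f : Cube m → ZMod 2) (x : Cube m) :
    (Finset.univ.filter fun y => f (x + y) ≠ 0).card = supp f := by
  refine Finset.card_equiv (Equiv.addLeft x) fun y => ?_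
  simp

/-- There is a family of operators lowering the degree by `k` (the `k`-fold derivatives) of which
all but a fraction `(2 ^ k - 1) * supp f / 2 ^ m` reproduce the value of `f` at any given point. -/
lemma exists_derivative_family (m k : ℕ) :
    ∃ (I : Type) (_ : Fintype I) (_ : Nonempty I)
      (T : I → (Cube m → ZMod 2) → (Cube m → ZMod 2)),
      (∀ Y d f, f ∈ degLT m d → T Y f ∈ degLT m (d - k)) ∧
      ∀ f x, (Finset.univ.filter fun Y => T Y f x ≠ f x).card * 2 ^ m
        ≤ (2 ^ k - 1) * Fintype.card I * supp f := by
  induction k with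
  | zero => exact ⟨Unit, inferInstance, inferInstance, fun _ f => f, by simp, by simp⟩
  | succ k ih =>
    obtain ⟨I, hI, hne, T, hdeg, hbad⟩ := ih
    refine ⟨I × Cube m, inferInstance, inferInstance, fun p f => diff p.2 (T p.1 f), ?_, ?_⟩
    · intro p d f hf
      exact diff_mem_degLT _ (hdeg p.1 d f hf)
    · intro f x
      classical
      set b : Cube m → Finset I := fun z => Finset.univ.filter fun Y => T Y f z ≠ f z with hb
      have hsub : (Finset.univ.filter fun p : I × Cube m => diff p.2 (T p.1 f) x ≠ f x) ⊆
          (b x ×ˢ Finset.univ) ∪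
          ((Finset.univ.filter fun p : I × Cube m => p.1 ∈ b (x + p.2)) ∪
          (Finset.univ ×ˢ Finset.univ.filter fun y => f (x + y) ≠ 0)) := by
        rintro ⟨Y, y⟩ hp
        rw [Finset.mem_filter] at hp
        replace hp : T Y f (x + y) - T Y f x ≠ f x := hp.2
        simp only [Finset.mem_filter, Finset.mem_univ, true_and, Finset.mem_union,
          Finset.mem_product, hb, and_true]
        by_contra! hcon
        obtain ⟨h1, h2, h3⟩ := hcon
        rw [h2, h3, h1] at hp
        apply hp
        rw [zero_sub, ZMod.neg_eq_self_mod_two]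
      have hmid : (Finset.univ.filter fun p : I × Cube m => p.1 ∈ b (x + p.2)).card * 2 ^ m
          ≤ 2 ^ m * ((2 ^ k - 1) * Fintype.card I * supp f) := by
        have : (Finset.univ.filter fun p : I × Cube m => p.1 ∈ b (x + p.2)).card
            = ∑ y : Cube m, (b (x + y)).card := by
          rw [Finset.card_filter, Fintype.sum_prod_type_right]
          refine Finset.sum_congr rfl fun y _ => ?_
          simp
        rw [this, Finset.sum_mul, ← card_cube, ← smul_eq_mul (Fintype.card (Cube m)), ← Finset.card_univ,
          ← Finset.sum_const]
        rw [Finset.card_univ, card_cube]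
        exact Finset.sum_le_sum fun y _ => hbad f (x + y)
      have hcard := (Finset.card_le_card hsub).trans
        ((Finset.card_union_le _ _).trans (Nat.add_le_add_left (Finset.card_union_le _ _) _))
      rw [Finset.card_product, Finset.card_product, card_translate_ne_zero, Finset.card_univ,
        Finset.card_univ, card_cube] at hcard
      have h1 := hbad f x
      have hpow : 2 ^ (k + 1) - 1 = 2 * (2 ^ k - 1) + 1 := by
        have := Nat.one_le_two_pow (n := k)
        rw [pow_succ]
        omega
      rw [Fintype.card_prod, card_cube, hpow]
      calc _ ≤ _ := Nat.mul_le_mul_right (2 ^ m) hcard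
        _ = (b x).card * 2 ^ m * 2 ^ m
            + (Finset.univ.filter fun p : I × Cube m => p.1 ∈ b (x + p.2)).card * 2 ^ m
            + Fintype.card I * supp f * 2 ^ m := by ring
        _ ≤ (2 ^ k - 1) * Fintype.card I * supp f * 2 ^ m
            + 2 ^ m * ((2 ^ k - 1) * Fintype.card I * supp f)
            + Fintype.card I * supp f * 2 ^ m := by gcongr
        _ = _ := by ring

/-- The majority value of `t` bits. -/
def maj {t : ℕ} (v : Fin t → ZMod 2) : ZMod 2 :=
  if t < 2 * (Finset.univ.filter fun j => v j = 1).card then 1 else 0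

lemma le_two_mul_card_of_maj_ne {t : ℕ} {v : Fin t → ZMod 2} {a : ZMod 2} (h : maj v ≠ a) :
    t ≤ 2 * (Finset.univ.filter fun j => v j ≠ a).card := by
  have hsum := Finset.card_filter_add_card_filter_not (s := Finset.univ) (fun j : Fin t => v j = 1)
  rw [Finset.card_univ, Fintype.card_fin] at hsum
  unfold maj at h
  have h01 : ∀ b : ZMod 2, b = 0 ∨ b = 1 := by decide
  rcases h01 a with rfl | rfl
  · have : ∀ b : ZMod 2, b ≠ 0 ↔ b = 1 := by decide
    simp only [this]
    split_ifs at h with h'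
    · exact h'.le
    · exact absurd rfl h
  · split_ifs at h with h'
    · exact absurd rfl h
    · simp only [ne_eq]
      omega

/-- If each of `t` independent votes is wrong with probability at most `1 / 4`, then at least half
of them are wrong with probability at most `(7 / 8) ^ t`. -/
lemma card_majority_wrong_le {I : Type} [Fintype I] (p : I → Prop) [DecidablePred p]
    (hp : 4 * (Finset.univ.filter p).card ≤ Fintype.card I) (t : ℕ) :
    8 ^ t * (Finset.univ.filter fun Y : Fin t → I =>
        t ≤ 2 * (Finset.univ.filter fun j => p (Y j)).card).card
      ≤ 7 ^ t * Fintype.card I ^ t := by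
  have hone : 4 * ∑ y : I, (if p y then 4 else 1) ≤ 7 * Fintype.card I := by
    have h := Finset.card_filter_add_card_filter_not (s := Finset.univ) p
    rw [Finset.card_univ] at h
    rw [Finset.sum_ite, Finset.sum_const, Finset.sum_const, smul_eq_mul, smul_eq_mul]
    linarith
  have hmarkov : 2 ^ t * (Finset.univ.filter fun Y : Fin t → I =>
        t ≤ 2 * (Finset.univ.filter fun j => p (Y j)).card).card
      ≤ (∑ y : I, (if p y then 4 else 1)) ^ t := by
    rw [Fintype.sum_pow, mul_comm, ← smul_eq_mul, ← Finset.sum_const]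
    refine (Finset.sum_le_sum fun Y hY => ?_).trans
      (Finset.sum_le_sum_of_subset (Finset.filter_subset _ _))
    rw [Finset.prod_ite, Finset.prod_const, Finset.prod_const_one, mul_one,
      show (4 : ℕ) = 2 ^ 2 by norm_num, ← pow_mul]
    exact Nat.pow_le_pow_right two_pos (Finset.mem_filter.1 hY).2
  calc _ = 4 ^ t * (2 ^ t * (Finset.univ.filter fun Y : Fin t → I =>
        t ≤ 2 * (Finset.univ.filter fun j => p (Y j)).card).card) := by
        rw [← mul_assoc, ← mul_pow]
        norm_num
    _ ≤ 4 ^ t * (∑ y : I, (if p y then 4 else 1)) ^ t := by gcongr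
    _ ≤ _ := by
      rw [← mul_pow, ← mul_pow]
      exact Nat.pow_le_pow_left hone t

lemma supp_sub_le {m : ℕ} (f g : Cube m → ZMod 2) : supp (f - g) ≤ supp f + supp g := by
  classical
  refine (Finset.card_le_card ?_).trans (Finset.card_union_le _ _)
  intro x hx
  simp only [Finset.mem_filter, Finset.mem_univ, true_and, Finset.mem_union, Pi.sub_apply] at hx ⊢
  by_contra! h
  exact hx (by rw [h.1, h.2, sub_zero])

/-- A sparse function is close to the majority of a few of its derivatives. -/
lemma exists_majority_approx {m d k s : ℕ} {f : Cube m → ZMod 2} (hf : f ∈ degLT m d)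
    (hk : 2 ^ k - 1 ≤ 2 ^ s) (hs : 2 ^ (s + 2) * supp f ≤ 2 ^ m) :
    ∃ g : Fin (6 * (s + 4)) → degLT m (d - k),
      2 ^ (s + 4) * supp (f - fun x => maj fun j => (g j : Cube m → ZMod 2) x) ≤ 2 ^ m := by
  classical
  obtain ⟨I, _, _, T, hdeg, hbad⟩ := exists_derivative_family m k
  set t := 6 * (s + 4) with ht
  have hquarter (x : Cube m) :
      4 * (Finset.univ.filter fun Y => T Y f x ≠ f x).card ≤ Fintype.card I := by
    refine Nat.le_of_mul_le_mul_right (c := 2 ^ m) ?_ (by positivity)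
    calc _ = 4 * ((Finset.univ.filter fun Y => T Y f x ≠ f x).card * 2 ^ m) := by ring
      _ ≤ 4 * ((2 ^ k - 1) * Fintype.card I * supp f) := Nat.mul_le_mul_left 4 (hbad f x)
      _ ≤ 4 * (2 ^ s * Fintype.card I * supp f) := by gcongr
      _ = Fintype.card I * (2 ^ (s + 2) * supp f) := by ring
      _ ≤ _ := by gcongr
  set G : (Fin t → I) → Cube m → ZMod 2 := fun Y x => maj fun j => T (Y j) f x with hG
  have hpoint (x : Cube m) :
      2 ^ (s + 4) * (Finset.univ.filter fun Y : Fin t → I => G Y x ≠ f x).card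
        ≤ Fintype.card I ^ t := by
    have h := card_majority_wrong_le (fun Y => T Y f x ≠ f x) (hquarter x) t
    have hsub : (Finset.univ.filter fun Y : Fin t → I => G Y x ≠ f x).card ≤
        (Finset.univ.filter fun Y : Fin t → I =>
          t ≤ 2 * (Finset.univ.filter fun j => T (Y j) f x ≠ f x).card).card :=
      Finset.card_le_card fun Y hY => by
        simp only [Finset.mem_filter, Finset.mem_univ, true_and] at hY ⊢
        exact le_two_mul_card_of_maj_ne hY
    have h87 : 2 ^ (s + 4) * 7 ^ t ≤ 8 ^ t := by
      rw [ht, pow_mul, pow_mul, ← mul_pow]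
      exact Nat.pow_le_pow_left (by norm_num) _
    refine le_of_mul_le_mul_left (le_trans ?_ h) (by positivity : 0 < 7 ^ t)
    rw [← mul_assoc, mul_comm (7 ^ t)]
    exact Nat.mul_le_mul h87 hsub
  obtain ⟨Y, hY⟩ : ∃ Y : Fin t → I, 2 ^ (s + 4) * supp (f - G Y) ≤ 2 ^ m := by
    by_contra! hcon
    have hlt : ∑ _Y : Fin t → I, 2 ^ m < ∑ Y : Fin t → I, 2 ^ (s + 4) * supp (f - G Y) :=
      Finset.sum_lt_sum_of_nonempty Finset.univ_nonempty fun Y _ => hcon Y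
    have hswap : ∑ Y : Fin t → I, supp (f - G Y)
        = ∑ x : Cube m, (Finset.univ.filter fun Y : Fin t → I => G Y x ≠ f x).card := by
      simp only [supp, Finset.card_filter]
      rw [Finset.sum_comm]
      refine Finset.sum_congr rfl fun x _ => Finset.sum_congr rfl fun Y _ => ?_
      simp only [Pi.sub_apply, ne_eq, sub_eq_zero, eq_comm (a := f x)]
    rw [← Finset.mul_sum, hswap, Finset.mul_sum] at hlt
    have hle := Finset.sum_le_sum fun x (_ : x ∈ (Finset.univ : Finset (Cube m))) => hpoint x
    simp only [Finset.sum_const, Finset.card_univ, smul_eq_mul, Fintype.card_pi,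
      Finset.prod_const, Fintype.card_fin] at hlt hle
    rw [mul_comm] at hle
    exact absurd hlt hle.not_gt
  exact ⟨fun j => ⟨T (Y j) f, hdeg _ _ _ hf⟩, hY⟩

open scoped Classical in
/-- The functions of degree less than `d` and fractional weight at most `2 ^ (-(s + 2))`. -/
noncomputable def sparse (m d s : ℕ) : Finset (Cube m → ZMod 2) :=
  Finset.univ.filter fun f => f ∈ degLT m d ∧ 2 ^ (s + 2) * supp f ≤ 2 ^ m

lemma card_sparse_le {m d k s : ℕ} (hk : 2 ^ k - 1 ≤ 2 ^ s) :
    (sparse m d s).card ≤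
      2 ^ (6 * (s + 4) * ∑ i ∈ Finset.range (d - k), m.choose i) * (sparse m d (s + 1)).card := by
  classical
  have hex (f : Cube m → ZMod 2) : ∃ g : Fin (6 * (s + 4)) → degLT m (d - k), f ∈ sparse m d s →
      2 ^ (s + 4) * supp (f - fun x => maj fun j => (g j : Cube m → ZMod 2) x) ≤ 2 ^ m := by
    by_cases hf : f ∈ sparse m d s
    · have hf' := (Finset.mem_filter.1 hf).2
      obtain ⟨g, hg⟩ := exists_majority_approx hf'.1 hk hf'.2
      exact ⟨g, fun _ => hg⟩
    · exact ⟨fun _ => 0, fun h => absurd h hf⟩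
  choose φ hφ using hex
  refine (Finset.card_le_mul_card_image_of_maps_to (f := φ) (t := Finset.univ)
    (fun _ _ => Finset.mem_univ _) (sparse m d (s + 1)).card fun g _ => ?_).trans ?_
  · rcases ((sparse m d s).filter fun f => φ f = g).eq_empty_or_nonempty with h | ⟨f₀, hf₀⟩
    · simp [h]
    · refine Finset.card_le_card_of_injOn (fun f => f - f₀) ?_
        (fun a _ b _ hab => sub_left_injective hab)
      intro f hf
      simp only [Finset.coe_filter, Set.mem_ofPred_eq, Finset.mem_filter] at hf hf₀
      have hf' := (Finset.mem_filter.1 hf.1).2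
      have hf₀' := (Finset.mem_filter.1 hf₀.1).2
      have h1 := hφ f hf.1
      have h2 := hφ f₀ hf₀.1
      rw [hf.2] at h1
      rw [hf₀.2] at h2
      refine Finset.mem_coe.2 (Finset.mem_filter.2 ⟨Finset.mem_univ _,
        Submodule.sub_mem _ hf'.1 hf₀'.1, ?_⟩)
      have h3 := supp_sub_le (f - fun x => maj fun j => (g j : Cube m → ZMod 2) x)
        (f₀ - fun x => maj fun j => (g j : Cube m → ZMod 2) x)
      rw [sub_sub_sub_cancel_right] at h3
      have h4 := Nat.mul_le_mul_left (2 ^ (s + 4)) h3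
      have h5 : 2 ^ (s + 4) * supp (f - f₀) = 2 * (2 ^ (s + 1 + 2) * supp (f - f₀)) := by ring
      rw [mul_add, h5] at h4
      change 2 ^ (s + 1 + 2) * supp (f - f₀) ≤ 2 ^ m
      linarith
  · rw [mul_comm]
    gcongr
    rw [Finset.card_univ, Fintype.card_pi, Finset.prod_const, Finset.card_univ, Fintype.card_fin,
      ← Nat.card_eq_fintype_card, mul_comm (6 * (s + 4)) (Finset.sum _ _), pow_mul 2]
    exact Nat.pow_le_pow_left (card_degLT_le _ _) _

lemma card_sparse_self_le (m d : ℕ) : (sparse m d d).card ≤ 1 := by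
  classical
  obtain ⟨I, _, _, T, hdeg, hbad⟩ := exists_derivative_family m d
  refine Finset.card_le_one_iff_subset_singleton.2 ⟨0, fun f hf => ?_⟩
  obtain ⟨hf, hs⟩ := (Finset.mem_filter.1 hf).2
  rw [Finset.mem_singleton]
  by_contra hne
  obtain ⟨x, hx⟩ := Function.ne_iff.1 hne
  have hzero (Y : I) : T Y f = 0 := by
    have h := hdeg Y d f hf
    rw [Nat.sub_self] at h
    simpa [degLT, lowSets] using h
  have h := hbad f x
  have hall : (Finset.univ.filter fun Y => T Y f x ≠ f x) = Finset.univ :=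
    Finset.filter_true_of_mem fun Y _ => by
      rw [hzero Y]
      exact hx.symm
  rw [hall, Finset.card_univ] at h
  have hI : 0 < Fintype.card I := Fintype.card_pos
  have h' : 2 ^ m ≤ (2 ^ d - 1) * supp f := by
    refine le_of_mul_le_mul_left (h.trans_eq ?_) hI
    ring
  have h2 : (2 ^ d - 1) * supp f ≤ 2 ^ d * supp f := Nat.mul_le_mul_right _ (Nat.sub_le _ _)
  have h3 : 2 ^ (d + 2) * supp f = 4 * (2 ^ d * supp f) := by ring
  have h4 : 0 < 2 ^ m := by positivity
  omega

lemma pow_mul_sum_choose_le {m r : ℕ} (hr : 1025 * r ≤ m) {k : ℕ} (hk : k ≤ r + 1) :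
    1024 ^ k * ∑ i ∈ Finset.range (r + 1 - k), m.choose i
      ≤ ∑ i ∈ Finset.range (r + 1), m.choose i := by
  induction k with
  | zero => simp
  | succ k ih =>
    refine le_trans ?_ (ih (by omega))
    rw [pow_succ, mul_assoc]
    gcongr
    rw [show r + 1 - k = (r + 1 - (k + 1)) + 1 by omega, Finset.sum_range_succ', Finset.mul_sum]
    refine le_add_right (Finset.sum_le_sum fun i hi => ?_)
    have hi := Finset.mem_range.1 hi
    refine Nat.le_of_mul_le_mul_right (c := i + 1) ?_ (by omega)
    rw [Nat.choose_succ_right_eq, mul_comm 1024, mul_assoc]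
    gcongr
    omega

lemma step_cost_le (s : ℕ) : 6 * (s + 4) * 2 ^ (s + 4) ≤ 1024 ^ max 1 s := by
  rcases Nat.eq_zero_or_pos s with rfl | hs
  · norm_num
  rw [max_eq_right hs]
  induction s, hs using Nat.le_induction with
  | base => norm_num
  | succ s hs ih =>
    calc 6 * (s + 1 + 4) * 2 ^ (s + 1 + 4) ≤ 1024 * (6 * (s + 4) * 2 ^ (s + 4)) := by
          rw [show s + 1 + 4 = (s + 4) + 1 by ring, pow_succ]
          nlinarith [Nat.zero_le (2 ^ (s + 4)), Nat.zero_le (s * 2 ^ (s + 4))]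
      _ ≤ 1024 * 1024 ^ s := by gcongr
      _ = _ := by ring

/-- The number of codewords of weight at most `2 ^ (-(s + 2))` is at most `2 ^ (N / 2 ^ (s + 3))`,
where `N` is the dimension of the code. -/
lemma card_sparse_le_rpow {m r : ℕ} (hrm : 1025 * r ≤ m) {s : ℕ} (hs : s ≤ r + 1) :
    ((sparse m (r + 1) s).card : ℝ) ≤ 2 ^ ((2 ^ (s + 3) : ℝ)⁻¹ * binomLe m r) := by
  induction hs using Nat.decreasingInduction with
  | self =>
    calc ((sparse m (r + 1) (r + 1)).card : ℝ) ≤ 1 := by exact_mod_cast card_sparse_self_le m (r + 1)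
      _ ≤ _ := Real.one_le_rpow (by norm_num) (by positivity)
  | of_succ s hs ih =>
    have hk : 2 ^ max 1 s - 1 ≤ 2 ^ s := by
      rcases Nat.eq_zero_or_pos s with rfl | h
      · norm_num
      · rw [max_eq_right h]
        exact Nat.sub_le _ _
    have hcount := card_sparse_le (m := m) (d := r + 1) hk
    have hratio := pow_mul_sum_choose_le hrm (k := max 1 s) (by omega)
    set c := ∑ i ∈ Finset.range (r + 1 - max 1 s), m.choose i
    have hcost : 6 * (s + 4) * c * 2 ^ (s + 4) ≤ binomLe m r := by
      refine le_trans ?_ hratio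
      calc _ = 6 * (s + 4) * 2 ^ (s + 4) * c := by ring
        _ ≤ _ := Nat.mul_le_mul_right _ (step_cost_le s)
    have hexp : ((6 * (s + 4) * c : ℕ) : ℝ) ≤ (2 ^ (s + 4) : ℝ)⁻¹ * binomLe m r := by
      rw [inv_mul_eq_div, le_div_iff₀ (by positivity)]
      exact_mod_cast hcost
    calc ((sparse m (r + 1) s).card : ℝ)
        ≤ 2 ^ (6 * (s + 4) * c) * ((sparse m (r + 1) (s + 1)).card : ℝ) := by
          exact_mod_cast hcount
      _ ≤ 2 ^ ((2 ^ (s + 4) : ℝ)⁻¹ * binomLe m r)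
          * 2 ^ ((2 ^ (s + 1 + 3) : ℝ)⁻¹ * binomLe m r) := by
        gcongr
        rw [← Real.rpow_natCast]
        exact Real.rpow_le_rpow_of_exponent_le (by norm_num) hexp
      _ = _ := by
        rw [← Real.rpow_add two_pos]
        congr 1
        field_simp
        ring

lemma evalLin_apply (m r : ℕ) (z : Fin m → ZMod 2) (c : RMcode m r) :
    evalLin m r z c = ∑ S : MonIdx m r, (∏ i ∈ S.1, z i) * c S := by
  simp [evalLin]

lemma evalLin_mem_degLT {m r : ℕ} (c : RMcode m r) :
    (fun z => evalLin m r z c) ∈ degLT m (r + 1) := by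
  have h : (fun z => evalLin m r z c) = ∑ S : MonIdx m r, c S • monomialFun m S.1 := by
    ext z
    simp only [evalLin_apply, monomialFun, Finset.sum_apply, Pi.smul_apply, smul_eq_mul, mul_comm]
  rw [h]
  exact Submodule.sum_mem _ fun S _ =>
    Submodule.smul_mem _ _ (monomialFun_mem_degLT (Nat.lt_succ_of_le S.2))

lemma evalLin_injective (m r : ℕ) :
    Function.Injective fun (c : RMcode m r) (z : Fin m → ZMod 2) => evalLin m r z c := by
  classical
  intro a b hab
  rw [← sub_eq_zero]
  set c := a - b with hc
  have hzero (z) : evalLin m r z c = 0 := by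
    rw [hc, map_sub, sub_eq_zero]
    exact congrFun hab z
  have key (n : ℕ) : ∀ S : MonIdx m r, S.1.card = n → c S = 0 := by
    induction n using Nat.strong_induction_on with
    | _ n ih =>
      intro S hS
      have h := hzero fun i => if i ∈ S.1 then 1 else 0
      rw [evalLin_apply, Finset.sum_eq_single S] at h
      · rwa [Finset.prod_congr rfl fun i hi => if_pos hi, Finset.prod_const_one, one_mul] at h
      · intro T _ hTS
        by_cases hsub : T.1 ⊆ S.1
        · have hss : T.1 ⊂ S.1 := hsub.ssubset_of_ne fun h => hTS (Subtype.ext h)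
          rw [ih _ (hS ▸ Finset.card_lt_card hss) T rfl, mul_zero]
        · obtain ⟨i, hiT, hiS⟩ := Finset.not_subset.1 hsub
          rw [Finset.prod_eq_zero hiT (if_neg hiS), zero_mul]
      · exact fun h => absurd (Finset.mem_univ S) h
  funext S
  exact key _ S rfl

lemma card_wt_le (m r s : ℕ) :
    Nat.card {c : RMcode m r // ((2 : ℝ) ^ (s + 2 + 1))⁻¹ ≤ wt m r c ∧
      wt m r c ≤ ((2 : ℝ) ^ (s + 2))⁻¹} ≤ (sparse m (r + 1) s).card := by
  classical
  rw [← Nat.card_eq_finsetCard]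
  refine Nat.card_le_card_of_injective
    (fun c => ⟨fun z => evalLin m r z c.1, Finset.mem_filter.2 ⟨Finset.mem_univ _,
      evalLin_mem_degLT c.1, ?_⟩⟩) fun a b hab => Subtype.ext (evalLin_injective m r ?_)
  · have h := c.2.2
    rw [wt, div_le_iff₀ (by positivity), inv_mul_eq_div, le_div_iff₀ (by positivity)] at h
    rw [mul_comm]
    exact_mod_cast h
  · exact congrArg Subtype.val hab

lemma one_sub_pow_le {β : ℝ} (hβ : 0 ≤ β) (hβ' : β ≤ 1) (K : ℕ) :
    (1 - β) ^ K ≤ 2 ^ (-(β * K)) := by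
  have h : 1 - β ≤ 2 ^ (-β) := by
    rw [Real.rpow_def_of_pos two_pos]
    refine (Real.one_sub_le_exp_neg β).trans (Real.exp_le_exp.2 ?_)
    nlinarith [Real.log_two_lt_d9]
  calc (1 - β) ^ K ≤ ((2 : ℝ) ^ (-β)) ^ K := by gcongr
    _ = _ := by
      rw [← Real.rpow_natCast, ← Real.rpow_mul two_pos.le]
      ring_nf

lemma exists_forall_pow_six_le {ε : ℝ} (hε : 0 < ε) :
    ∃ m₀ : ℕ, ∀ n : ℕ, m₀ ≤ n → (n : ℝ) ^ 6 ≤ 2 ^ (ε * n / 2) := by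
  have hb : (1 : ℝ) < 2 ^ (ε / 2) := Real.one_lt_rpow (by norm_num) (by positivity)
  have h := (isLittleO_pow_const_const_pow_of_one_lt (R := ℝ) 6 hb).bound one_pos
  obtain ⟨m₀, hm₀⟩ := Filter.eventually_atTop.1 h
  refine ⟨m₀, fun n hn => ?_⟩
  have := hm₀ n hn
  rw [one_mul, Real.norm_of_nonneg (by positivity), Real.norm_of_nonneg (by positivity)] at this
  refine this.trans_eq ?_
  rw [← Real.rpow_natCast, ← Real.rpow_mul two_pos.le]
  ring_nf

lemma le_binomLe {m r : ℕ} (hr : 1 ≤ r) : m ≤ binomLe m r := by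
  have h := Finset.single_le_sum (f := fun i => m.choose i) (fun _ _ => Nat.zero_le _)
    (Finset.mem_range.2 (by omega : 1 < r + 1))
  simpa [binomLe] using h

end ReedMuller

/-- contribution of low-weight codewords.
There is an absolute constant `γ₀ > 0` such that for every `ε ∈ (0,1)` there is
`m₀` such that for all `m ≥ m₀`, all `1 ≤ r ≤ γ₀ m` and all `2 ≤ i ≤ r - 1`,
setting `K = ⌊(1-ε)·binom(m,≤r)⌋` and `δ = binom(m,≤r)^{-2}`, the number `L_i`
of polynomials `P ∈ RM(m,r)` with `2^{-(i+1)} ≤ wt(P) ≤ 2^{-i}` satisfies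
`L_i · (1 - 2^{-(i+1)})^K / 2^{binom(m,≤r) - K} ≤ δ³`. -/
theorem low_weight_contribution :
    ∃ γ₀ : ℝ, 0 < γ₀ ∧
      ∀ ε : ℝ, 0 < ε → ε < 1 →
        ∃ m₀ : ℕ, ∀ m : ℕ, m₀ ≤ m →
          ∀ r : ℕ, 1 ≤ r → (r : ℝ) ≤ γ₀ * m →
            ∀ i : ℕ, 2 ≤ i → i + 1 ≤ r →
              ∀ K : ℕ, K = ⌊(1 - ε) * (binomLe m r : ℝ)⌋₊ →
                ∀ δ : ℝ, δ = ((binomLe m r : ℝ) ^ 2)⁻¹ →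
                  (Nat.card {c : RMcode m r //
                        ((2 : ℝ) ^ (i + 1))⁻¹ ≤ wt m r c ∧
                          wt m r c ≤ ((2 : ℝ) ^ i)⁻¹} : ℝ) *
                      (1 - ((2 : ℝ) ^ (i + 1))⁻¹) ^ K /
                        2 ^ (binomLe m r - K) ≤ δ ^ 3 := by
  refine ⟨1 / 1025, by norm_num, fun ε hε hε1 => ?_⟩
  obtain ⟨m₀, hm₀⟩ := ReedMuller.exists_forall_pow_six_le hε
  refine ⟨m₀ + 1, fun m hm r hr hrm i hi hir K hK δ hδ => ?_⟩
  obtain ⟨s, rfl⟩ : ∃ s, i = s + 2 := ⟨i - 2, by omega⟩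
  have hrm' : 1025 * r ≤ m := by
    have : 1025 * (r : ℝ) ≤ m := by linarith
    exact_mod_cast this
  have hmN : m ≤ binomLe m r := ReedMuller.le_binomLe hr
  have hL := (Nat.cast_le (α := ℝ).2 (ReedMuller.card_wt_le m r s)).trans
    (ReedMuller.card_sparse_le_rpow hrm' (s := s) (by omega))
  have hpow := hm₀ (binomLe m r) (by omega)
  have hKle : (K : ℝ) ≤ (1 - ε) * binomLe m r := by
    rw [hK]
    exact Nat.floor_le (mul_nonneg (by linarith) (Nat.cast_nonneg _))
  have hNpos : (0 : ℝ) < binomLe m r := by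
    exact_mod_cast (by omega : 0 < binomLe m r)
  set N := binomLe m r
  have hKN : K ≤ N := by
    have : (K : ℝ) ≤ N := by nlinarith
    exact_mod_cast this
  set β : ℝ := ((2 : ℝ) ^ (s + 3))⁻¹ with hβ
  have hβ0 : 0 ≤ β := by positivity
  have hβ2 : β ≤ 1 / 2 := by
    rw [hβ, one_div]
    refine inv_anti₀ two_pos ?_
    calc (2 : ℝ) = 2 ^ 1 := by norm_num
      _ ≤ _ := pow_le_pow_right₀ (by norm_num) (by omega)
  have hβK := ReedMuller.one_sub_pow_le hβ0 (by linarith) K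
  rw [hδ, inv_pow, ← pow_mul]
  calc _ ≤ (2 : ℝ) ^ (β * N) * 2 ^ (-(β * K)) / 2 ^ (N - K) := by
        have : 0 ≤ (1 - β) ^ K := pow_nonneg (by linarith) K
        gcongr
    _ = 2 ^ (-((1 - β) * (N - K))) := by
      rw [← Real.rpow_natCast, Nat.cast_sub hKN, ← Real.rpow_add two_pos, ← Real.rpow_sub two_pos]
      ring_nf
    _ ≤ 2 ^ (-(ε * N / 2)) := by
      refine Real.rpow_le_rpow_of_exponent_le (by norm_num) ?_
      have hgap : ε * N ≤ N - K := by linarith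
      have hgap0 : (0 : ℝ) ≤ N - K := (by positivity : 0 ≤ ε * N).trans hgap
      nlinarith [mul_le_mul_of_nonneg_right hβ2 hgap0]
    _ = (2 ^ (ε * N / 2))⁻¹ := Real.rpow_neg two_pos.le _
    _ ≤ _ := inv_anti₀ (by positivity) hpow
end

section
/- There exists an absolute constant γ₀ > 0 such that for every constant ε ∈ (0,1) there exists m₀ such that for all m ≥ m₀, all r with 1 ≤ r ≤ γ₀·m, and all integers i with 2 ≤ i ≤ t, where δ = binom(m,≤r)^{-2} and t = log₂(1/δ), the following holds. Set K = ⌊(1-ε)·binom(m,≤r)⌋ and let M_i be the number of polynomials P ∈ RM(m,r) with 1/2 - 2^{-i} ≤ wt(P) ≤ 1/2 - 2^{-(i+1)}. Then M_i · (1/2 + 2^{-i})^K / 2^{binom(m,≤r) - K} ≤ δ³. -/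
/-- The number of ones in the binary expansion of `j`. -/
def binWeight (j : ℕ) : ℕ := (Nat.digits 2 j).sum

lemma binWeight_two_mul (j : ℕ) : binWeight (2 * j) = binWeight j := by
  rcases Nat.eq_zero_or_pos j with rfl | hj
  · simp
  · unfold binWeight
    rw [Nat.digits_def' (by norm_num) (by omega : 0 < 2 * j)]
    simp

lemma binWeight_two_mul_add_one (j : ℕ) : binWeight (2 * j + 1) = binWeight j + 1 := by
  unfold binWeight
  rw [Nat.digits_def' (by norm_num) (by omega : 0 < 2 * j + 1)]
  have h1 : (2 * j + 1) % 2 = 1 := by omega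
  have h2 : (2 * j + 1) / 2 = j := by omega
  rw [h1, h2, List.sum_cons, add_comm]

/-- The number of `j < s` with fewer than `d` ones in binary. -/
def lightCount (d s : ℕ) : ℕ := ((Finset.range s).filter fun j => binWeight j < d).card

lemma lightCount_succ (d s : ℕ) :
    lightCount d (s + 1) = lightCount d s + if binWeight s < d then 1 else 0 := by
  unfold lightCount
  rw [Finset.range_add_one, Finset.filter_insert]
  split_ifs <;> simp

lemma lightCount_zero_right (d : ℕ) : lightCount d 0 = 0 := rfl

lemma lightCount_zero_left (s : ℕ) : lightCount 0 s = 0 := by simp [lightCount]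

lemma lightCount_mono (d : ℕ) : Monotone (lightCount d) :=
  monotone_nat_of_le_succ fun s => by rw [lightCount_succ]; omega

lemma lightCount_one (d : ℕ) : lightCount (d + 1) 1 = 1 := by
  rw [lightCount_succ _ 0, lightCount_zero_right]
  simp [binWeight]

lemma lightCount_two_mul (d s : ℕ) :
    lightCount d (2 * s) = lightCount d s + lightCount (d - 1) s := by
  induction s with
  | zero => rfl
  | succ s ih =>
    rw [show 2 * (s + 1) = 2 * s + 1 + 1 by ring]
    simp only [lightCount_succ, ih, binWeight_two_mul, binWeight_two_mul_add_one]
    split_ifs <;> omega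

lemma lightCount_two_mul_add_one (d s : ℕ) :
    lightCount d (2 * s + 1) = lightCount d (s + 1) + lightCount (d - 1) s := by
  simp only [lightCount_succ, lightCount_two_mul, binWeight_two_mul]
  omega

/-- Initial segments in binary order minimise the number of light elements. -/
lemma lightCount_add_le (d a b : ℕ) (hab : b ≤ a) :
    lightCount d (a + b) ≤ lightCount d a + lightCount (d - 1) b := by
  induction hs : a + b using Nat.strong_induction_on generalizing d a b with
  | _ s ih =>
    subst hs
    rcases Nat.eq_zero_or_pos b with rfl | hb
    · simp
    obtain ⟨a', rfl | rfl⟩ := Nat.even_or_odd' a <;> obtain ⟨b', rfl | rfl⟩ := Nat.even_or_odd' b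
    · have h1 := ih (a' + b') (by omega) d a' b' (by omega) rfl
      have h2 := ih (a' + b') (by omega) (d - 1) a' b' (by omega) rfl
      rw [← mul_add]
      simp only [lightCount_two_mul]
      omega
    · have h1 := ih (a' + (b' + 1)) (by omega) d a' (b' + 1) (by omega) rfl
      have h2 := ih (a' + b') (by omega) (d - 1) a' b' (by omega) rfl
      rw [show 2 * a' + (2 * b' + 1) = 2 * (a' + b') + 1 by ring]
      simp only [lightCount_two_mul, lightCount_two_mul_add_one, ← add_assoc] at *
      omega
    · have h1 := ih (a' + 1 + b') (by omega) d (a' + 1) b' (by omega) rfl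
      have h2 := ih (a' + b') (by omega) (d - 1) a' b' (by omega) rfl
      rw [show 2 * a' + 1 + 2 * b' = 2 * (a' + b') + 1 by ring]
      rw [show a' + 1 + b' = a' + b' + 1 by ring] at h1
      simp only [lightCount_two_mul, lightCount_two_mul_add_one]
      omega
    · rcases Nat.lt_or_ge b' a' with hlt | hge
      · have h1 := ih (a' + 1 + b') (by omega) d (a' + 1) b' (by omega) rfl
        have h2 := ih (a' + (b' + 1)) (by omega) (d - 1) a' (b' + 1) (by omega) rfl
        have h3 := lightCount_succ (d - 1) b'
        have h4 := lightCount_succ (d - 1 - 1) b'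
        rw [show 2 * a' + 1 + (2 * b' + 1) = 2 * (a' + b' + 1) by ring]
        rw [show a' + 1 + b' = a' + b' + 1 by ring] at h1
        rw [← add_assoc] at h2
        simp only [lightCount_two_mul, lightCount_two_mul_add_one]
        split_ifs at h3 h4 <;> omega
      · obtain rfl : a' = b' := by omega
        rw [← two_mul, lightCount_two_mul]

lemma lightCount_two_pow_succ (d n : ℕ) :
    lightCount d (2 ^ (n + 1)) = lightCount d (2 ^ n) + lightCount (d - 1) (2 ^ n) := by
  rw [pow_succ', lightCount_two_mul]

lemma sum_lightCount_two_pow (d n : ℕ) :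
    ∑ l ∈ Finset.range n, lightCount d (2 ^ l) + 1 = lightCount (d + 1) (2 ^ n) := by
  induction n with
  | zero => simp [lightCount_one]
  | succ n ih =>
    rw [Finset.sum_range_succ, lightCount_two_pow_succ, ← ih, Nat.add_sub_cancel]
    ring

/-- The span of the images under `v` of a tuple of points. -/
def tupleSpan {V α : Type*} [AddCommGroup V] [Module (ZMod 2) V] (v : α → V) {k : ℕ}
    (Z : Fin k → α) : Submodule (ZMod 2) V := Submodule.span (ZMod 2) (Set.range (v ∘ Z))

/-- The dimension of `tupleSpan v Z`. -/
noncomputable def tupleRank {V α : Type*} [AddCommGroup V] [Module (ZMod 2) V] (v : α → V) {k : ℕ}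
    (Z : Fin k → α) : ℕ := Module.finrank (ZMod 2) (tupleSpan v Z)

open scoped Classical in
/-- Tuples of points whose images span a space of dimension less than `R`, when every such space
captures at most an `x`-fraction of the points. -/
lemma card_small_span_le {V α : Type*} [AddCommGroup V] [Module (ZMod 2) V]
    [FiniteDimensional (ZMod 2) V] [Fintype α] (v : α → V) (R : ℕ) (x : ℝ) (hx0 : 0 ≤ x)
    (hx1 : x ≤ 1)
    (hv : ∀ Q : Submodule (ZMod 2) V, Module.finrank (ZMod 2) Q < R →
      ((Finset.univ.filter fun z => v z ∈ Q).card : ℝ) ≤ Fintype.card α * x) (k : ℕ) :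
    ((Finset.univ.filter fun Z : Fin k → α =>
      tupleRank v Z < R).card : ℝ) * x ^ R
      ≤ (2 * Fintype.card α * x) ^ k := by
  have key : ∀ k : ℕ, ∑ Z : Fin k → α, (if tupleRank v Z < R then x ^ tupleRank v Z else 0)
      ≤ (2 * Fintype.card α * x) ^ k := by
    intro k
    induction k with
    | zero =>
      simp only [Finset.univ_unique, Finset.sum_singleton, pow_zero]
      split_ifs
      · exact pow_le_one₀ hx0 hx1
      · norm_num
    | succ k ih =>
      rw [← (Fin.consEquiv fun _ : Fin (k + 1) => α).sum_comp, Fintype.sum_prod_type_right,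
        pow_succ]
      refine le_trans ?_ (mul_le_mul_of_nonneg_right ih (by positivity))
      rw [Finset.sum_mul]
      refine Finset.sum_le_sum fun Z _ => ?_
      change ∑ z, (if tupleRank v (Fin.cons z Z : Fin (k + 1) → α) < R
        then x ^ tupleRank v (Fin.cons z Z : Fin (k + 1) → α) else 0) ≤ _
      have hle : ∀ z, tupleSpan v Z ≤ tupleSpan v (Fin.cons z Z : Fin (k + 1) → α) := fun z => by
        refine Submodule.span_mono ?_
        rintro _ ⟨j, rfl⟩
        exact ⟨j.succ, by simp⟩
      have hmem : ∀ z, v z ∈ tupleSpan v (Fin.cons z Z : Fin (k + 1) → α) := fun z =>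
        Submodule.subset_span ⟨0, by simp⟩
      have hrle : ∀ z, tupleRank v Z ≤ tupleRank v (Fin.cons z Z : Fin (k + 1) → α) :=
        fun z =>
        Submodule.finrank_mono (hle z)
      by_cases hR : tupleRank v Z < R
      · calc _ ≤ ∑ z, ((if v z ∈ tupleSpan v Z then x ^ tupleRank v Z else 0)
                + x ^ (tupleRank v Z + 1)) := by
              refine Finset.sum_le_sum fun z _ => ?_
              have hp : (0 : ℝ) ≤ x ^ (tupleRank v Z + 1) := by positivity
              by_cases hz : v z ∈ tupleSpan v Z
              · rw [if_pos hz]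
                have : x ^ tupleRank v (Fin.cons z Z : Fin (k + 1) → α) ≤ x ^ tupleRank v Z :=
                  pow_le_pow_of_le_one hx0 hx1 (hrle z)
                have h0 : (0 : ℝ) ≤ x ^ tupleRank v Z := by positivity
                split_ifs <;> linarith
              · rw [if_neg hz, zero_add]
                have hlt : tupleRank v Z < tupleRank v (Fin.cons z Z : Fin (k + 1) → α) := by
                  refine Submodule.finrank_lt_finrank_of_lt (lt_of_le_of_ne (hle z) ?_)
                  intro h
                  exact hz (h ▸ hmem z)
                have : x ^ tupleRank v (Fin.cons z Z : Fin (k + 1) → α) ≤ x ^ (tupleRank v Z + 1) :=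
                  pow_le_pow_of_le_one hx0 hx1 hlt
                split_ifs <;> linarith
          _ ≤ Fintype.card α * x * x ^ tupleRank v Z
                + Fintype.card α * x ^ (tupleRank v Z + 1) := by
              rw [Finset.sum_add_distrib, ← Finset.sum_filter, Finset.sum_const, Finset.sum_const,
                nsmul_eq_mul, nsmul_eq_mul, Finset.card_univ]
              have := mul_le_mul_of_nonneg_right (hv _ hR)
                (by positivity : (0 : ℝ) ≤ x ^ tupleRank v Z)
              linarith
          _ = _ := by rw [if_pos hR]; ring
      · rw [if_neg hR, zero_mul]
        refine le_of_eq (Finset.sum_eq_zero fun z _ => if_neg ?_)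
        have := hrle z
        omega
  refine le_trans ?_ (key k)
  rw [← Finset.sum_filter, ← nsmul_eq_mul, ← Finset.sum_const]
  refine Finset.sum_le_sum fun Z hZ => ?_
  exact pow_le_pow_of_le_one hx0 hx1 (Finset.mem_filter.1 hZ).2.le

/-- The space of evaluations of polynomials of degree less than `d` on the points
`j ↦ (w t j)_t`, spanned by the products of fewer than `d` distinct coordinate functions `w t`. -/
def evalSpan {ι : Type*} {n : ℕ} (d : ℕ) (w : Fin n → ι → ZMod 2) :
    Submodule (ZMod 2) (ι → ZMod 2) :=
  Submodule.span (ZMod 2) (Set.range fun S : {S : Finset (Fin n) // S.card < d} => ∏ t ∈ S.1, w t)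

section evalSpan

variable {ι κ : Type*} {n : ℕ}

lemma prod_mem_evalSpan {d : ℕ} (w : Fin n → ι → ZMod 2) (S : Finset (Fin n)) (hS : S.card < d) :
    ∏ t ∈ S, w t ∈ evalSpan d w :=
  Submodule.subset_span ⟨⟨S, hS⟩, rfl⟩

lemma evalSpan_le_cons (d : ℕ) (a : ι → ZMod 2) (w : Fin n → ι → ZMod 2) :
    evalSpan d w ≤ evalSpan d (Fin.cons a w : Fin (n + 1) → ι → ZMod 2) := by
  rw [evalSpan, Submodule.span_le]
  rintro _ ⟨⟨S, hS⟩, rfl⟩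
  have h := prod_mem_evalSpan (d := d) (Fin.cons a w : Fin (n + 1) → ι → ZMod 2)
    (S.map (Fin.succEmb n)) (by simpa using hS)
  simpa [Finset.prod_map] using h

lemma mul_mem_evalSpan_cons {d : ℕ} (a : ι → ZMod 2) (w : Fin n → ι → ZMod 2) {u : ι → ZMod 2}
    (hu : u ∈ evalSpan d w) :
    a * u ∈ evalSpan (d + 1) (Fin.cons a w : Fin (n + 1) → ι → ZMod 2) := by
  have h : evalSpan d w ≤ (evalSpan (d + 1) (Fin.cons a w : Fin (n + 1) → ι → ZMod 2)).comap
      (LinearMap.mulLeft (ZMod 2) a) := by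
    rw [evalSpan, Submodule.span_le]
    rintro _ ⟨⟨S, hS⟩, rfl⟩
    have h0 : (0 : Fin (n + 1)) ∉ S.map (Fin.succEmb n) := by simp [Fin.succ_ne_zero]
    have h := prod_mem_evalSpan (d := d + 1) (Fin.cons a w : Fin (n + 1) → ι → ZMod 2)
      (insert 0 (S.map (Fin.succEmb n))) (by rw [Finset.card_insert_of_notMem h0]; simpa using hS)
    rw [Finset.prod_insert h0] at h
    simpa [Finset.prod_map] using h
  exact h hu

lemma evalSpan_comp (d : ℕ) (w : Fin n → ι → ZMod 2) (e : κ → ι) :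
    evalSpan d (fun t => w t ∘ e) = (evalSpan d w).map (LinearMap.funLeft (ZMod 2) (ZMod 2) e) := by
  rw [evalSpan, evalSpan, Submodule.map_span, ← Set.range_comp]
  congr 2
  ext S j
  simp [LinearMap.funLeft_apply, Finset.prod_apply]

lemma apply_eq_of_mem_evalSpan {d : ℕ} {w : Fin n → ι → ZMod 2} {u : ι → ZMod 2}
    (hu : u ∈ evalSpan d w) {j j' : ι} (hj : ∀ t, w t j = w t j') : u j = u j' := by
  have h : evalSpan d w ≤ LinearMap.eqLocus (LinearMap.proj (R := ZMod 2) (φ := fun _ => ZMod 2) j)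
      (LinearMap.proj (R := ZMod 2) (φ := fun _ => ZMod 2) j') := by
    rw [evalSpan, Submodule.span_le]
    rintro _ ⟨⟨S, hS⟩, rfl⟩
    simp [Finset.prod_apply, hj]
  exact h hu

end evalSpan

/-- Evaluations of polynomials of degree less than `d` on a set of `s` points span a space of
dimension at least `lightCount d s`. -/
lemma lightCount_card_le_finrank_evalSpan {ι : Type} [Fintype ι] {n : ℕ} (d : ℕ)
    (w : Fin n → ι → ZMod 2) :
    lightCount d (Finset.univ.image fun (j : ι) (t : Fin n) => w t j).card
      ≤ Module.finrank (ZMod 2) (evalSpan d w) := by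
  classical
  induction n generalizing ι d with
  | zero =>
    rcases d with _ | d
    · simp [lightCount_zero_left]
    rcases isEmpty_or_nonempty ι with hι | ⟨⟨j⟩⟩
    · simp [lightCount_zero_right]
    · refine (lightCount_mono _ (Finset.card_le_one_of_subsingleton _)).trans ?_
      rw [lightCount_one, Nat.one_le_iff_ne_zero, Nat.pos_iff_ne_zero.symm,
        Module.finrank_pos_iff_exists_ne_zero]
      refine ⟨⟨_, prod_mem_evalSpan w ∅ (by simp)⟩, fun h => ?_⟩
      have := congrFun (congrArg Subtype.val h) j
      simp at this
  | succ n ih =>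
    rcases d with _ | d
    · simp [lightCount_zero_left]
    obtain ⟨a, w, rfl⟩ : ∃ a w', w = Fin.cons a w' := ⟨w 0, Fin.tail w, (Fin.cons_self_tail w).symm⟩
    set pt : ι → Fin n → ZMod 2 := fun j t => w t j with hpt
    set X : ZMod 2 → Finset (Fin n → ZMod 2) :=
      fun b => (Finset.univ.filter fun j => a j = b).image pt with hX
    have hbit : ∀ b : ZMod 2, b = 0 ∨ b = 1 := by decide
    have hcard : (Finset.univ.image fun (j : ι) (t : Fin (n + 1)) =>
        (Fin.cons a w : Fin (n + 1) → ι → ZMod 2) t j).card ≤ (X 0).card + (X 1).card := by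
      have hsub : (Finset.univ.image fun (j : ι) (t : Fin (n + 1)) =>
          (Fin.cons a w : Fin (n + 1) → ι → ZMod 2) t j) ⊆
          (X 0).image (Fin.cons (α := fun _ => ZMod 2) 0) ∪
          (X 1).image (Fin.cons (α := fun _ => ZMod 2) 1) := by
        intro p hp
        obtain ⟨j, -, rfl⟩ := Finset.mem_image.1 hp
        have hp : (fun t : Fin (n + 1) => (Fin.cons a w : Fin (n + 1) → ι → ZMod 2) t j)
            = Fin.cons (a j) (pt j) := by
          ext t
          refine Fin.cases ?_ (fun t => ?_) t <;> simp [hpt]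
        rw [hp, Finset.mem_union]
        have hj : pt j ∈ X (a j) := Finset.mem_image_of_mem _ (by simp)
        rcases hbit (a j) with h | h <;> rw [h] at hj ⊢
        · exact Or.inl (Finset.mem_image_of_mem _ hj)
        · exact Or.inr (Finset.mem_image_of_mem _ hj)
      exact (Finset.card_le_card hsub).trans ((Finset.card_union_le _ _).trans
        (add_le_add Finset.card_image_le Finset.card_image_le))
    have hunion : X 0 ∪ X 1 = Finset.univ.image pt := by
      ext y
      simp only [hX, Finset.mem_union, Finset.mem_image, Finset.mem_filter, Finset.mem_univ,
        true_and]
      constructor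
      · rintro (⟨j, -, h⟩ | ⟨j, -, h⟩) <;> exact ⟨j, h⟩
      · rintro ⟨j, h⟩
        exact (hbit (a j)).imp (fun h' => ⟨j, h', h⟩) (fun h' => ⟨j, h', h⟩)
    rw [← Finset.card_union_add_card_inter, hunion] at hcard
    have hY : ∀ y : {y // y ∈ X 0 ∩ X 1}, ∀ b : ZMod 2, ∃ j, a j = b ∧ pt j = y := by
      rintro ⟨y, hy⟩ b
      have hy' : y ∈ X b := by
        rcases hbit b with rfl | rfl
        · exact (Finset.mem_inter.1 hy).1
        · exact (Finset.mem_inter.1 hy).2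
      obtain ⟨j, hj, h⟩ := Finset.mem_image.1 hy'
      exact ⟨j, (Finset.mem_filter.1 hj).2, h⟩
    choose e he hey using hY
    set φ : (ι → ZMod 2) →ₗ[ZMod 2] ({y // y ∈ X 0 ∩ X 1} → ZMod 2) :=
      LinearMap.funLeft (ZMod 2) (ZMod 2) (fun y => e y 0) +
        LinearMap.funLeft (ZMod 2) (ZMod 2) (fun y => e y 1) with hφ
    set U := evalSpan (d + 1) (Fin.cons a w : Fin (n + 1) → ι → ZMod 2) with hU
    have hcoord : ∀ (y) (t : Fin n), w t (e y 0) = w t (e y 1) := fun y t => by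
      have := (hey y 0).trans (hey y 1).symm
      exact congrFun this t
    have hker : evalSpan (d + 1) w ≤ U ⊓ LinearMap.ker φ := by
      refine le_inf (evalSpan_le_cons _ _ _) fun u hu => ?_
      rw [LinearMap.mem_ker]
      ext y
      have := apply_eq_of_mem_evalSpan hu (hcoord y)
      simp [hφ, LinearMap.funLeft_apply, this, CharTwo.add_self_eq_zero]
    have hmap : evalSpan d (fun t => w t ∘ fun y => e y 1) ≤ U.map φ := by
      rw [evalSpan_comp]
      rintro _ ⟨u, hu, rfl⟩
      refine ⟨a * u, mul_mem_evalSpan_cons a w hu, ?_⟩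
      ext y
      simp [hφ, LinearMap.funLeft_apply, he]
    have hinj : (Finset.univ.image fun (y : {y // y ∈ X 0 ∩ X 1}) (t : Fin n) =>
        (w t ∘ fun y => e y 1) y).card = (X 0 ∩ X 1).card := by
      rw [Finset.card_image_of_injective, Finset.card_univ, Fintype.card_coe]
      intro y y' h
      exact Subtype.ext ((hey y 1).symm.trans (h.trans (hey y' 1)))
    have h1 : lightCount (d + 1) (Finset.univ.image pt).card
      ≤ Module.finrank (ZMod 2) (evalSpan (d + 1) w) := ih (d + 1) w
    have h2 := ih d (fun t => w t ∘ fun y => e y 1)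
    rw [hinj] at h2
    have h3 := Submodule.finrank_mono hker
    have h4 := Submodule.finrank_mono hmap
    have h5 := LinearMap.finrank_range_add_finrank_ker (φ.domRestrict U)
    rw [LinearMap.range_domRestrict, LinearMap.ker_domRestrict,
      ← Submodule.finrank_map_subtype_eq, Submodule.map_comap_subtype] at h5
    have h6 := lightCount_add_le (d + 1) (Finset.univ.image pt).card (X 0 ∩ X 1).card
      (by rw [← hunion]; exact Finset.card_le_card Finset.inter_subset_union)
    have h7 := lightCount_mono (d + 1) hcard
    simp only [Nat.add_sub_cancel] at h6
    omega

/-- The values at `z` of the multilinear monomials of degree less than `d`. -/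
def lowMonVec (d : ℕ) {n : ℕ} (z : Fin n → ZMod 2) : {S : Finset (Fin n) // S.card < d} → ZMod 2 :=
  fun S => ∏ t ∈ S.1, z t

lemma finrank_evalSpan_eq {ι : Type*} [Fintype ι] {n : ℕ} (d : ℕ) (z : ι → Fin n → ZMod 2) :
    Module.finrank (ZMod 2) (evalSpan d fun t j => z j t)
      = Module.finrank (ZMod 2) (Submodule.span (ZMod 2) (Set.range (lowMonVec d ∘ z))) := by
  let M : Matrix ι {S : Finset (Fin n) // S.card < d} (ZMod 2) := Matrix.of (lowMonVec d ∘ z)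
  have h1 := M.rank_eq_finrank_span_cols
  have h2 := M.rank_eq_finrank_span_row
  have h3 : (evalSpan d fun t j => z j t) = Submodule.span (ZMod 2) (Set.range M.col) := by
    rw [evalSpan]
    congr 2
    ext S j
    simp [M, lowMonVec, Matrix.col, Finset.prod_apply]
  rw [h3, ← h1, h2]
  rfl

lemma card_mem_lt_of_finrank_lt {n d s : ℕ}
    (Q : Submodule (ZMod 2) ({S : Finset (Fin n) // S.card < d} → ZMod 2))
    (hQ : Module.finrank (ZMod 2) Q < lightCount d s) [DecidablePred fun z => lowMonVec d z ∈ Q] :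
    (Finset.univ.filter fun z : Fin n → ZMod 2 => lowMonVec d z ∈ Q).card < s := by
  by_contra! hs
  set X := Finset.univ.filter fun z : Fin n → ZMod 2 => lowMonVec d z ∈ Q with hX
  have h1 := lightCount_card_le_finrank_evalSpan d (fun (t : Fin n) (z : X) => z.1 t)
  rw [Finset.card_image_of_injective _ fun y y' h => Subtype.ext h, Finset.card_univ,
    Fintype.card_coe, finrank_evalSpan_eq d (fun z : X => z.1)] at h1
  have h2 : Submodule.span (ZMod 2) (Set.range (lowMonVec d ∘ fun z : X => z.1)) ≤ Q := by
    rw [Submodule.span_le]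
    rintro _ ⟨z, rfl⟩
    exact (Finset.mem_filter.1 z.2).2
  have h3 := Submodule.finrank_mono h2
  have h4 := lightCount_mono d hs
  omega

open scoped Classical in
lemma card_finrank_evalSpan_lt_le {n d h : ℕ} (hn : h ≤ n) (k : ℕ) :
    ((Finset.univ.filter fun w : Fin n → Fin k → ZMod 2 =>
        Module.finrank (ZMod 2) (evalSpan d w) < lightCount d (2 ^ (n - h))).card : ℝ)
      * (2 ^ h)⁻¹ ^ lightCount d (2 ^ (n - h)) ≤ (2 * 2 ^ n * (2 ^ h)⁻¹) ^ k := by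
  have h1 := card_small_span_le (lowMonVec d (n := n)) (lightCount d (2 ^ (n - h)))
    ((2 : ℝ) ^ h)⁻¹ (by positivity) (inv_le_one_of_one_le₀ (one_le_pow₀ (by norm_num)))
    (fun Q hQ => by
      have h2 := (card_mem_lt_of_finrank_lt Q hQ).le
      have h3 : ((2 : ℝ) ^ (n - h)) = 2 ^ n * (2 ^ h)⁻¹ := by
        rw [pow_sub₀ _ (by norm_num) hn]
      simp only [Fintype.card_fun, ZMod.card, Fintype.card_fin]
      push_cast
      rw [← h3]
      exact_mod_cast h2) k
  simp only [Fintype.card_fun, ZMod.card, Fintype.card_fin] at h1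
  push_cast at h1
  convert h1 using 3
  refine Finset.card_bij (fun w _ => fun j t => w t j) ?_ ?_ ?_
  · intro w hw
    simp only [Finset.mem_filter, Finset.mem_univ, true_and] at hw ⊢
    rwa [tupleRank, tupleSpan, ← finrank_evalSpan_eq]
  · intro w _ w' _ h
    exact funext fun t => funext fun j => congrFun (congrFun h j) t
  · intro Z hZ
    refine ⟨fun t j => Z j t, ?_, rfl⟩
    simp only [Finset.mem_filter, Finset.mem_univ, true_and] at hZ ⊢
    rwa [finrank_evalSpan_eq]

open scoped Classical in
lemma card_orthogonal_mul {ι : Type*} [Fintype ι] [DecidableEq ι]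
    (U : Submodule (ZMod 2) (ι → ZMod 2)) :
    (Finset.univ.filter fun a : ι → ZMod 2 => ∀ u ∈ U, ∑ j, (a * u) j = 0).card
      * 2 ^ Module.finrank (ZMod 2) U = 2 ^ Fintype.card ι := by
  have h1 := Subspace.finrank_add_finrank_dualAnnihilator_eq U
  rw [Module.finrank_fintype_fun_eq_card] at h1
  have := Module.finite_of_finite (ZMod 2) (M := U.dualAnnihilator)
  have := Fintype.ofFinite U.dualAnnihilator
  have h2 := Module.card_eq_pow_finrank (K := ZMod 2) (V := U.dualAnnihilator)
  rw [← h1, pow_add, mul_comm]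
  congr 1
  rw [ZMod.card] at h2
  rw [← h2, ← Fintype.card_subtype]
  refine Fintype.card_congr ((dotProductEquiv (ZMod 2) ι).toEquiv.subtypeEquiv fun a => ?_)
  rw [Submodule.mem_dualAnnihilator]
  rfl

/-- The number of `k`-tuples of points in `F₂^n`, given by their coordinate vectors, at which the
values of every polynomial of degree less than `d` sum to zero. -/
noncomputable def balancedCount (n d k : ℕ) : ℕ :=
  Nat.card {w : Fin n → Fin k → ZMod 2 // ∀ u ∈ evalSpan d w, ∑ j, u j = 0}

open scoped Classical in
lemma balancedCount_succ_le (n d k R : ℕ) :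
    (balancedCount (n + 1) (d + 1) k : ℝ) ≤ balancedCount n (d + 1) k * (2 ^ k / 2 ^ R)
      + 2 ^ k * (Finset.univ.filter fun w : Fin n → Fin k → ZMod 2 =>
        Module.finrank (ZMod 2) (evalSpan d w) < R).card := by
  simp only [balancedCount, Nat.card_eq_fintype_card, Fintype.card_subtype]
  simp only [Finset.card_filter]
  push_cast
  rw [← (Fin.consEquiv fun _ : Fin (n + 1) => Fin k → ZMod 2).sum_comp,
    Fintype.sum_prod_type_right, Finset.sum_mul, Finset.mul_sum, ← Finset.sum_add_distrib]
  refine Finset.sum_le_sum fun w _ => ?_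
  change ∑ a, (if ∀ u ∈ evalSpan (d + 1) (Fin.cons a w : Fin (n + 1) → Fin k → ZMod 2),
    ∑ j, u j = 0 then (1 : ℝ) else 0) ≤ _
  have hone : ∀ (p : Prop) [Decidable p], (if p then (1 : ℝ) else 0) ≤ 1 := fun p _ => by
    split_ifs <;> norm_num
  have hpow : (0 : ℝ) ≤ 2 ^ k / 2 ^ R := by positivity
  by_cases hR : Module.finrank (ZMod 2) (evalSpan d w) < R
  · rw [if_pos hR]
    refine (Finset.sum_le_sum fun a _ => hone _).trans ?_
    simp only [Finset.sum_const, Finset.card_univ, Fintype.card_fun, ZMod.card, Fintype.card_fin,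
      nsmul_eq_mul]
    push_cast
    split_ifs <;> linarith
  · rw [if_neg hR, mul_zero, add_zero]
    by_cases hw : ∀ u ∈ evalSpan (d + 1) w, ∑ j, u j = 0
    · rw [if_pos hw, one_mul]
      have h1 := card_orthogonal_mul (evalSpan d w)
      rw [Fintype.card_fin] at h1
      have h2 : ((Finset.univ.filter fun a : Fin k → ZMod 2 =>
          ∀ u ∈ evalSpan d w, ∑ j, (a * u) j = 0).card : ℝ) ≤ 2 ^ k / 2 ^ R := by
        rw [le_div_iff₀ (by positivity)]
        calc _ ≤ ((Finset.univ.filter fun a : Fin k → ZMod 2 =>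
              ∀ u ∈ evalSpan d w, ∑ j, (a * u) j = 0).card : ℝ)
                * 2 ^ Module.finrank (ZMod 2) (evalSpan d w) := by
              gcongr
              · norm_num
              · omega
          _ = 2 ^ k := by exact_mod_cast h1
      refine le_trans ?_ h2
      rw [Finset.card_filter]
      push_cast
      refine Finset.sum_le_sum fun a _ => ?_
      by_cases ha : ∀ u ∈ evalSpan (d + 1) (Fin.cons a w : Fin (n + 1) → Fin k → ZMod 2),
        ∑ j, u j = 0
      · rw [if_pos ha, if_pos fun u hu => ha _ (mul_mem_evalSpan_cons a w hu)]
      · rw [if_neg ha]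
        split_ifs <;> norm_num
    · rw [if_neg hw, zero_mul]
      refine le_of_eq (Finset.sum_eq_zero fun a _ => if_neg fun h => hw fun u hu => ?_)
      exact h u (evalSpan_le_cons _ _ _ hu)

lemma balancedCount_zero_le (d k : ℕ) : balancedCount 0 d k ≤ 1 := by
  exact Finite.card_le_one_iff_subsingleton.2 inferInstance

open scoped Classical in
lemma balancedCount_div_le (d k : ℕ) (R : ℕ → ℕ) (n : ℕ) :
    (balancedCount n (d + 1) k : ℝ) / (2 ^ k) ^ n ≤ (2 ^ ∑ t ∈ Finset.range n, R t)⁻¹ +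
      ∑ t ∈ Finset.range n, ((Finset.univ.filter fun w : Fin t → Fin k → ZMod 2 =>
        Module.finrank (ZMod 2) (evalSpan d w) < R t).card : ℝ) / (2 ^ k) ^ t := by
  induction n with
  | zero => simpa using balancedCount_zero_le (d + 1) k
  | succ n ih =>
    rw [Finset.sum_range_succ, Finset.sum_range_succ, pow_add 2, mul_inv]
    set B := ∑ t ∈ Finset.range n, ((Finset.univ.filter fun w : Fin t → Fin k → ZMod 2 =>
        Module.finrank (ZMod 2) (evalSpan d w) < R t).card : ℝ) / (2 ^ k) ^ t with hB
    have hB0 : 0 ≤ B := Finset.sum_nonneg fun t _ => by positivity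
    have hR1 : ((2 : ℝ) ^ R n)⁻¹ ≤ 1 := inv_le_one_of_one_le₀ (one_le_pow₀ (by norm_num))
    have hR0 : (0 : ℝ) ≤ ((2 : ℝ) ^ R n)⁻¹ := by positivity
    have h1 := mul_le_mul_of_nonneg_right ih hR0
    have h2 : B * ((2 : ℝ) ^ R n)⁻¹ ≤ B := mul_le_of_le_one_right hB0 hR1
    have h3 := div_le_div_of_nonneg_right (balancedCount_succ_le n d k (R n))
      (by positivity : (0 : ℝ) ≤ (2 ^ k) ^ (n + 1))
    rw [add_div] at h3
    have h4 : (balancedCount n (d + 1) k : ℝ) * (2 ^ k / 2 ^ R n) / (2 ^ k) ^ (n + 1)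
        = balancedCount n (d + 1) k / (2 ^ k) ^ n * ((2 : ℝ) ^ R n)⁻¹ := by
      rw [pow_succ]
      field_simp
    rw [h4, pow_succ' ((2 : ℝ) ^ k), mul_div_mul_left _ _ (by positivity)] at h3
    rw [pow_succ']
    linarith

lemma balancedCount_div_le_of_gap (d g n s k : ℕ) (hk : lightCount d (2 ^ n) ≤ k) :
    (balancedCount (g + n + s) (d + 1) k : ℝ) / (2 ^ k) ^ (g + n + s)
      ≤ 2 / 2 ^ (lightCount (d + 1) (2 ^ n) + s * lightCount d (2 ^ n))
        + (g + n + s : ℕ) * (2 ^ k / 2 ^ (g * (k - lightCount d (2 ^ n)))) := by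
  classical
  set R : ℕ → ℕ := fun t => if t < g then 0 else lightCount d (2 ^ (min t (g + n) - g)) with hR
  have hsum : ∑ t ∈ Finset.range (g + n + s), R t + 1
      = lightCount (d + 1) (2 ^ n) + s * lightCount d (2 ^ n) := by
    have h1 : ∑ t ∈ Finset.range g, R t = 0 :=
      Finset.sum_eq_zero fun t ht => if_pos (Finset.mem_range.1 ht)
    have h2 : ∑ t ∈ Finset.range n, R (g + t) = ∑ t ∈ Finset.range n, lightCount d (2 ^ t) := by
      refine Finset.sum_congr rfl fun t ht => ?_
      have := Finset.mem_range.1 ht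
      simp only [hR]
      rw [if_neg (by omega), min_eq_left (by omega), Nat.add_sub_cancel_left]
    have h3 : ∑ t ∈ Finset.range s, R (g + n + t) = s * lightCount d (2 ^ n) := by
      rw [Finset.sum_congr rfl (g := fun _ => lightCount d (2 ^ n))]
      · simp
      · intro t _
        simp only [hR]
        rw [if_neg (by omega), min_eq_right (by omega), Nat.add_sub_cancel_left]
    rw [Finset.sum_range_add, Finset.sum_range_add, h1, h2, h3, ← sum_lightCount_two_pow]
    ring
  refine (balancedCount_div_le d k R (g + n + s)).trans (add_le_add (le_of_eq ?_) ?_)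
  · rw [← hsum, pow_succ]
    field_simp
  · rw [← nsmul_eq_mul]
    conv_rhs => rw [← Finset.card_range (g + n + s)]
    refine Finset.sum_le_card_nsmul _ _ _ fun t _ => ?_
    by_cases ht : t < g
    · simp only [hR, if_pos ht]
      simp
      positivity
    · obtain ⟨q, hq⟩ : ∃ q, q = min t (g + n) - g := ⟨_, rfl⟩
      obtain ⟨h, hh⟩ : ∃ h, h = t - q := ⟨_, rfl⟩
      have hRt : R t = lightCount d (2 ^ (t - h)) := by
        simp only [hR, if_neg ht]
        congr 2
        omega
      have hle : lightCount d (2 ^ (t - h)) ≤ lightCount d (2 ^ n) :=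
        lightCount_mono d (Nat.pow_le_pow_right (by norm_num) (by omega))
      have h1 := card_finrank_evalSpan_lt_le (d := d) (show h ≤ t by omega) k
      rw [hRt]
      set c := ((Finset.univ.filter fun w : Fin t → Fin k → ZMod 2 =>
        Module.finrank (ZMod 2) (evalSpan d w) < lightCount d (2 ^ (t - h))).card : ℝ) with hc
      set p := lightCount d (2 ^ (t - h)) with hp
      have h2 : c / (2 ^ k) ^ t ≤ 2 ^ k / 2 ^ (h * (k - p)) := by
        rw [div_le_div_iff₀ (by positivity) (by positivity)]
        have h3 := mul_le_mul_of_nonneg_right h1 (by positivity : (0 : ℝ) ≤ (2 ^ h) ^ k)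
        have h4 : c * (2 ^ h)⁻¹ ^ p * (2 ^ h) ^ k = c * 2 ^ (h * (k - p)) := by
          obtain ⟨l, rfl⟩ := Nat.exists_eq_add_of_le (hle.trans hk)
          rw [Nat.add_sub_cancel_left, pow_mul, pow_add, inv_pow]
          field_simp
        have h5 : ((2 : ℝ) * 2 ^ t * (2 ^ h)⁻¹) ^ k * (2 ^ h) ^ k = 2 ^ k * (2 ^ k) ^ t := by
          rw [← mul_pow, inv_mul_cancel_right₀ (by positivity), mul_pow, ← pow_mul, ← pow_mul,
            mul_comm k t]
        linarith
      refine h2.trans ?_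
      gcongr
      · norm_num
      · omega

/-- The nontrivial real character of `F₂`. -/
noncomputable def signChar : AddChar (ZMod 2) ℝ where
  toFun x := if x = 0 then 1 else -1
  map_zero_eq_one' := if_pos rfl
  map_add_eq_mul' x y := by
    have h : ∀ x : ZMod 2, x = 0 ∨ x = 1 := by decide
    have h2 : (1 + 1 : ZMod 2) = 0 := by decide
    rcases h x with rfl | rfl <;> rcases h y with rfl | rfl <;> simp [h2]

lemma signChar_apply (x : ZMod 2) : signChar x = if x = 0 then 1 else -1 := rfl

lemma sum_signChar_linear {V : Type*} [AddCommGroup V] [Module (ZMod 2) V] [Fintype V]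
    (L : V →ₗ[ZMod 2] ZMod 2) [Decidable (L = 0)] :
    ∑ c, signChar (L c) = if L = 0 then (Fintype.card V : ℝ) else 0 := by
  have hne : signChar.compAddMonoidHom L.toAddMonoidHom = 0 ↔ L = 0 := by
    constructor
    · intro h
      ext c
      have h1 := DFunLike.congr_fun h c
      by_contra hc
      simp [signChar_apply, show L c ≠ 0 from hc] at h1
      norm_num at h1
    · rintro rfl
      ext c
      simp
  have h := AddChar.sum_eq_ite (signChar.compAddMonoidHom L.toAddMonoidHom)
  simp only [hne] at h
  simpa using h

lemma evalLin_apply (m r : ℕ) (z : Fin m → ZMod 2) (c : RMcode m r) :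
    evalLin m r z c = ∑ S : MonIdx m r, (∏ i ∈ S.1, z i) * c S := by
  simp [evalLin]

lemma sum_signChar_evalLin (m r : ℕ) (c : RMcode m r) :
    ∑ z, signChar (evalLin m r z c) = 2 ^ m * (1 - 2 * wt m r c) := by
  have h : ∀ x : ZMod 2, signChar x = 1 - 2 * if x ≠ 0 then 1 else 0 := fun x => by
    rw [signChar_apply]
    by_cases hx : x = 0
    · simp [hx]
    · simp [hx]
      norm_num
  simp only [h, Finset.sum_sub_distrib, ← Finset.mul_sum, Finset.sum_boole, wt]
  simp
  field_simp

lemma card_sum_evalLin_eq_zero_le (m r k : ℕ) :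
    Nat.card {Z : Fin k → Fin m → ZMod 2 // ∑ j, evalLin m r (Z j) = 0}
      ≤ balancedCount m (r + 1) k := by
  classical
  refine Nat.card_le_card_of_injective (fun Z => ⟨fun t j => Z.1 j t, ?_⟩) ?_
  · have hle : evalSpan (r + 1) (fun t j => Z.1 j t) ≤
        LinearMap.ker (∑ j, LinearMap.proj (R := ZMod 2) (φ := fun _ : Fin k => ZMod 2) j) := by
      rw [evalSpan, Submodule.span_le]
      rintro _ ⟨⟨S, hS⟩, rfl⟩
      have h := LinearMap.congr_fun Z.2 (Pi.single ⟨S, Nat.le_of_lt_succ hS⟩ 1)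
      simpa [evalLin_apply, Pi.single_apply, Finset.prod_apply] using h
    intro u hu
    simpa using hle hu
  · intro Z Z' h
    refine Subtype.ext (funext fun j => funext fun t => ?_)
    exact congrFun (congrFun (congrArg Subtype.val h) t) j

lemma card_monIdx (m r : ℕ) : Fintype.card (MonIdx m r) = binomLe m r := by
  classical
  rw [Fintype.card_subtype, binomLe]
  rw [Finset.card_eq_sum_card_fiberwise (f := Finset.card) (t := Finset.range (r + 1))
    (fun S hS => by simpa [Nat.lt_succ_iff] using hS)]
  refine Finset.sum_congr rfl fun i hi => ?_
  have hi' := Finset.mem_range.1 hi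
  rw [show m.choose i = (Finset.powersetCard i (Finset.univ : Finset (Fin m))).card by simp]
  congr 1
  ext S
  simp only [Finset.mem_filter, Finset.mem_univ, true_and, Finset.mem_powersetCard_univ]
  omega

lemma sum_bias_pow_le (m r k : ℕ) :
    ∑ c : RMcode m r, (1 - 2 * wt m r c) ^ k
      ≤ 2 ^ binomLe m r * (balancedCount m (r + 1) k / (2 ^ k) ^ m) := by
  classical
  have h1 : ∑ c : RMcode m r, (∑ z, signChar (evalLin m r z c)) ^ k
      = 2 ^ binomLe m r
        * Nat.card {Z : Fin k → Fin m → ZMod 2 // ∑ j, evalLin m r (Z j) = 0} := by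
    simp only [Fintype.sum_pow]
    rw [Finset.sum_comm]
    have h2 : ∀ Z : Fin k → Fin m → ZMod 2,
        ∑ c : RMcode m r, ∏ j, signChar (evalLin m r (Z j) c)
          = if ∑ j, evalLin m r (Z j) = 0 then (Fintype.card (RMcode m r) : ℝ) else 0 :=
      fun Z => by
        rw [← sum_signChar_linear]
        refine Finset.sum_congr rfl fun c _ => ?_
        rw [LinearMap.sum_apply]
        exact (map_prod signChar.toMonoidHom _ _).symm
    simp only [h2]
    rw [← Finset.sum_filter, Finset.sum_const, nsmul_eq_mul, Nat.card_eq_fintype_card,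
      Fintype.card_subtype, mul_comm, Fintype.card_fun, card_monIdx, ZMod.card]
    push_cast
    rfl
  simp only [sum_signChar_evalLin, mul_pow, ← Finset.mul_sum] at h1
  have h3 : ((Nat.card {Z : Fin k → Fin m → ZMod 2 // ∑ j, evalLin m r (Z j) = 0} : ℕ) : ℝ)
      ≤ balancedCount m (r + 1) k := by exact_mod_cast card_sum_evalLin_eq_zero_le m r k
  rw [← mul_div_assoc, le_div_iff₀ (by positivity), mul_comm, ← pow_mul, mul_comm k m, pow_mul, h1]
  gcongr

/-- Markov's inequality for an even moment of the bias. -/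
lemma card_wt_le_mul_le (m r i k : ℕ) (hk : Even k) :
    (Nat.card {c : RMcode m r // 1 / 2 - ((2 : ℝ) ^ i)⁻¹ ≤ wt m r c ∧
        wt m r c ≤ 1 / 2 - ((2 : ℝ) ^ (i + 1))⁻¹} : ℝ)
      ≤ 2 ^ binomLe m r * 2 ^ (i * k) * (balancedCount m (r + 1) k / (2 ^ k) ^ m) := by
  classical
  rw [Nat.card_eq_fintype_card, Fintype.card_subtype]
  have h1 := sum_bias_pow_le m r k
  have h2 : ∀ c ∈ Finset.univ.filter fun c : RMcode m r => 1 / 2 - ((2 : ℝ) ^ i)⁻¹ ≤ wt m r c ∧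
      wt m r c ≤ 1 / 2 - ((2 : ℝ) ^ (i + 1))⁻¹,
      ((2 : ℝ) ^ (i * k))⁻¹ ≤ (1 - 2 * wt m r c) ^ k := by
    intro c hc
    have hc2 := (Finset.mem_filter.1 hc).2.2
    rw [pow_mul, ← inv_pow]
    refine pow_le_pow_left₀ (by positivity) ?_ k
    rw [pow_succ, mul_inv] at hc2
    linarith
  have h3 := Finset.card_nsmul_le_sum _ _ _ h2
  have h4 := Finset.sum_le_sum_of_subset_of_nonneg
    (Finset.subset_univ (Finset.univ.filter fun c : RMcode m r =>
      1 / 2 - ((2 : ℝ) ^ i)⁻¹ ≤ wt m r c ∧ wt m r c ≤ 1 / 2 - ((2 : ℝ) ^ (i + 1))⁻¹))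
    (fun c _ _ => hk.pow_nonneg (1 - 2 * wt m r c))
  have h5 := (h3.trans h4).trans h1
  rw [nsmul_eq_mul, mul_inv_le_iff₀ (by positivity)] at h5
  linarith

lemma binomLe_zero_right (n : ℕ) : binomLe n 0 = 1 := by simp [binomLe]

lemma binomLe_succ_right (n d : ℕ) : binomLe n (d + 1) = binomLe n d + n.choose (d + 1) := by
  rw [binomLe, Finset.sum_range_succ, ← binomLe]

lemma binomLe_succ_succ (n d : ℕ) :
    binomLe (n + 1) (d + 1) = binomLe n (d + 1) + binomLe n d := by
  induction d with
  | zero => simp [binomLe_succ_right, binomLe_zero_right]; ring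
  | succ d ih =>
    rw [binomLe_succ_right, ih, Nat.choose_succ_succ, binomLe_succ_right n (d + 1),
      binomLe_succ_right n d]
    ring

lemma lightCount_two_pow (n d : ℕ) : lightCount (d + 1) (2 ^ n) = binomLe n d := by
  induction n generalizing d with
  | zero =>
    rw [pow_zero, lightCount_one, binomLe, Finset.sum_range_succ']
    simp
  | succ n ih =>
    rw [lightCount_two_pow_succ, ih, Nat.add_sub_cancel]
    cases d with
    | zero => simp [lightCount_zero_left, binomLe_zero_right]
    | succ d => rw [ih, binomLe_succ_succ]

lemma mul_binomLe_succ_le (n d : ℕ) :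
    (d + 1) * binomLe n (d + 1) ≤ (d + 1 + n) * binomLe n d := by
  have h1 := Nat.choose_succ_right_eq n d
  have h2 : n.choose d ≤ binomLe n d :=
    Finset.single_le_sum (f := fun i => n.choose i) (fun _ _ => Nat.zero_le _)
      (Finset.mem_range.2 (Nat.lt_succ_self d))
  have h3 : n.choose d * (n - d) ≤ binomLe n d * n := Nat.mul_le_mul h2 (Nat.sub_le n d)
  rw [binomLe_succ_right]
  nlinarith

lemma binomLe_mul_pow_le (m r : ℕ) (hr : r ≤ m) (x : ℝ) (hx0 : 0 ≤ x) (hx1 : x ≤ 1) :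
    (binomLe m r : ℝ) * x ^ r ≤ (x + 1) ^ m := by
  rw [add_pow, binomLe]
  push_cast
  rw [Finset.sum_mul]
  refine (Finset.sum_le_sum fun j hj => ?_).trans (Finset.sum_le_sum_of_subset_of_nonneg
    (Finset.range_mono (Nat.succ_le_succ hr)) fun j _ _ => by positivity)
  have hj' := Finset.mem_range.1 hj
  rw [one_pow, mul_one, mul_comm]
  exact mul_le_mul_of_nonneg_right (pow_le_pow_of_le_one hx0 hx1 (by omega)) (by positivity)

lemma binomLe_le_exp_mul (n a r : ℕ) (har : 2 * (a + r) ≤ n + a) :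
    (binomLe (n + a) r : ℝ) ≤ Real.exp (2 * a * r / (n + a : ℕ)) * binomLe n r := by
  rcases Nat.eq_zero_or_pos (n + a) with h0 | hm
  · obtain ⟨rfl, rfl⟩ := Nat.add_eq_zero_iff.1 h0
    simp
  have hmR : (0 : ℝ) < (n + a : ℕ) := by exact_mod_cast hm
  set q : ℝ := 1 + 2 * a / (n + a : ℕ) with hq
  have hq1 : 1 ≤ q := le_add_of_nonneg_right (by positivity)
  have hchoose : ∀ j ≤ r, ((n + a).choose j : ℝ) ≤ q ^ j * n.choose j := by
    intro j
    induction j with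
    | zero => simp
    | succ j ih =>
      intro hj
      have h1 := Nat.choose_succ_right_eq (n + a) j
      have h2 := Nat.choose_succ_right_eq n j
      obtain ⟨l, hl⟩ : ∃ l, n = j + l := Nat.exists_eq_add_of_le (by omega)
      rw [show n + a - j = l + a by omega] at h1
      rw [show n - j = l by omega] at h2
      have h1' : ((n + a).choose (j + 1) : ℝ) * (j + 1) = (n + a).choose j * (l + a) := by
        exact_mod_cast h1
      have h2' : (n.choose (j + 1) : ℝ) * (j + 1) = n.choose j * l := by exact_mod_cast h2
      have hl2 : ((n + a : ℕ) : ℝ) ≤ 2 * l := by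
        have : n + a ≤ 2 * l := by omega
        exact_mod_cast this
      have hql : (l + a : ℝ) ≤ q * l := by
        have : (a : ℝ) ≤ 2 * a / (n + a : ℕ) * l := by
          rw [div_mul_eq_mul_div, le_div_iff₀ hmR]
          nlinarith [Nat.cast_nonneg (α := ℝ) a]
        rw [hq]
        linarith
      refine le_of_mul_le_mul_right ?_ (by positivity : (0 : ℝ) < j + 1)
      calc ((n + a).choose (j + 1) : ℝ) * (j + 1) = (n + a).choose j * (l + a) := h1'
        _ ≤ (q ^ j * n.choose j) * (q * l) := by
            gcongr
            exact ih (by omega)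
        _ = q ^ (j + 1) * (n.choose j * l) := by ring
        _ = _ := by rw [← h2']; ring
  have hqr : q ^ r ≤ Real.exp (2 * a * r / (n + a : ℕ)) := by
    rw [show 2 * (a : ℝ) * r / (n + a : ℕ) = r * (2 * a / (n + a : ℕ)) by ring, Real.exp_nat_mul]
    refine pow_le_pow_left₀ (by linarith) ?_ r
    rw [hq, add_comm]
    exact Real.add_one_le_exp _
  refine le_trans ?_ (mul_le_mul_of_nonneg_right hqr (by positivity))
  unfold binomLe
  push_cast
  rw [Finset.mul_sum]
  refine Finset.sum_le_sum fun j hj =>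
    (hchoose j (by have := Finset.mem_range.1 hj; omega)).trans ?_
  exact mul_le_mul_of_nonneg_right
    (pow_le_pow_right₀ hq1 (by have := Finset.mem_range.1 hj; omega)) (by positivity)

lemma succ_le_binomLe (m r : ℕ) (hr : 1 ≤ r) : m + 1 ≤ binomLe m r := by
  calc m + 1 = binomLe m 1 := by simp [binomLe, Finset.sum_range_succ]; ring
    _ ≤ binomLe m r := Finset.sum_le_sum_of_subset (Finset.range_mono (by omega))

/-- The number of polynomials of bias at least `2^{-i}`, up to a loss of `g + 64 i` variables. -/
lemma card_wt_le_of_gap (g n r i : ℕ) (hr : 1 ≤ r)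
    (hg : (g + n + 64 * i) + r * (64 * i + 65) ≤ 63 * g * r) :
    (Nat.card {c : RMcode (g + n + 64 * i) r //
        1 / 2 - ((2 : ℝ) ^ i)⁻¹ ≤ wt (g + n + 64 * i) r c ∧
        wt (g + n + 64 * i) r c ≤ 1 / 2 - ((2 : ℝ) ^ (i + 1))⁻¹} : ℝ)
      ≤ 2 ^ binomLe (g + n + 64 * i) r * (((g + n + 64 * i : ℕ) + 2) / 2 ^ binomLe n r) := by
  obtain ⟨e, rfl⟩ := Nat.exists_eq_add_of_le' hr
  have h1 := balancedCount_div_le_of_gap (e + 1) g n (64 * i) (64 * binomLe n e)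
    (by rw [lightCount_two_pow]; omega)
  have h2 := card_wt_le_mul_le (g + n + 64 * i) (e + 1) i (64 * binomLe n e)
    ((by decide : Even 64).mul_right _)
  rw [lightCount_two_pow, lightCount_two_pow] at h1
  have h3 : 64 * binomLe n e * (i + 1) + binomLe n (e + 1) ≤ g * (63 * binomLe n e) := by
    refine Nat.le_of_mul_le_mul_left ?_ (Nat.succ_pos e)
    have h4 := mul_binomLe_succ_le n e
    have h5 := Nat.mul_le_mul_right (binomLe n e) hg
    simp only [Nat.succ_eq_add_one]
    nlinarith
  refine h2.trans ?_
  rw [mul_assoc]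
  refine mul_le_mul_of_nonneg_left ?_ (by positivity)
  refine (mul_le_mul_of_nonneg_left h1 (by positivity)).trans ?_
  rw [show 64 * binomLe n e - binomLe n e = 63 * binomLe n e by omega]
  set ρ := binomLe n e with hρ
  set N := binomLe n (e + 1) with hN
  set M : ℝ := ((g + n + 64 * i : ℕ) : ℝ) with hM
  have hM0 : 0 ≤ M := Nat.cast_nonneg _
  have e1 : (2 : ℝ) ^ (i * (64 * ρ)) * (2 / 2 ^ (N + 64 * i * ρ)) = 2 / 2 ^ N := by
    rw [pow_add, show i * (64 * ρ) = 64 * i * ρ by ring]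
    field_simp
  have e2 : (2 : ℝ) ^ (i * (64 * ρ)) * (2 ^ (64 * ρ) / 2 ^ (g * (63 * ρ))) ≤ 1 / 2 ^ N := by
    rw [← mul_div_assoc, div_le_div_iff₀ (by positivity) (by positivity), one_mul, ← pow_add,
      ← pow_add]
    refine pow_le_pow_right₀ (by norm_num) ?_
    linarith
  calc _ = (2 : ℝ) ^ (i * (64 * ρ)) * (2 / 2 ^ (N + 64 * i * ρ))
        + M * ((2 : ℝ) ^ (i * (64 * ρ)) * (2 ^ (64 * ρ) / 2 ^ (g * (63 * ρ)))) := by ring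
    _ ≤ 2 / 2 ^ N + M * (1 / 2 ^ N) := add_le_add e1.le (mul_le_mul_of_nonneg_left e2 hM0)
    _ = _ := by ring

lemma two_mul_exp_le_two_pow (i : ℕ) (hi : 2 ≤ i) :
    2 * Real.exp (i / 16) ≤ 0.58 * 2 ^ i := by
  have he : Real.exp (1 / 16) ≤ 1.0648 := by
    have h1 : Real.exp (1 / 16) ^ 16 = Real.exp 1 := by
      rw [← Real.exp_nat_mul]
      norm_num
    refine le_of_pow_le_pow_left₀ (n := 16) (by norm_num) (by norm_num) ?_
    rw [h1]
    have := Real.exp_one_lt_d9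
    norm_num at this ⊢
    linarith
  have he0 := Real.exp_pos (1 / 16)
  induction i, hi using Nat.le_induction with
  | base =>
    rw [show ((2 : ℕ) : ℝ) / 16 = ((2 : ℕ) : ℝ) * (1 / 16) by ring, Real.exp_nat_mul]
    nlinarith
  | succ i _ ih =>
    rw [show ((i + 1 : ℕ) : ℝ) / 16 = i / 16 + 1 / 16 by push_cast; ring, Real.exp_add, pow_succ]
    nlinarith [Real.exp_pos ((i : ℝ) / 16)]

lemma mul_div_le_inv_pow_six {m N N' K i : ℕ} (hN : Real.exp 600 ≤ N) (hm : m + 1 ≤ N) (hK : K ≤ N)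
    (hi : 2 ≤ i) (hiN : (2 : ℝ) ^ i ≤ (N : ℝ) ^ 2) (hN' : (N : ℝ) ≤ Real.exp (i / 16) * N') :
    ((m : ℝ) + 2) / 2 ^ N' * (1 + 2 * ((2 : ℝ) ^ i)⁻¹) ^ K ≤ ((N : ℝ) ^ 6)⁻¹ := by
  have hN0 : (0 : ℝ) < N := (Real.exp_pos _).trans_le hN
  set u := Real.log N with hu
  have hu600 : 600 ≤ u := (Real.le_log_iff_exp_le hN0).2 hN
  have hNu : (N : ℝ) = Real.exp u := (Real.exp_log hN0).symm
  have hlog2 := Real.log_two_gt_d9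
  have hlog2' := Real.log_two_lt_d9
  have hm2 : Real.log ((m : ℝ) + 2) ≤ 2 * u := by
    have h1 : (m : ℝ) + 1 ≤ N := by exact_mod_cast hm
    have h2 : (m : ℝ) + 2 ≤ 2 * N := by
      have : (0 : ℝ) ≤ m := Nat.cast_nonneg m
      linarith
    have h3 := Real.log_le_log (by positivity) h2
    rw [Real.log_mul (by norm_num) hN0.ne'] at h3
    linarith
  have hiu : (i : ℝ) * Real.log 2 ≤ 2 * u := by
    have h1 := Real.log_le_log (by positivity) hiN
    rw [Real.log_pow, Real.log_pow] at h1
    exact_mod_cast h1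
  have hi8 : (i : ℝ) / 16 ≤ u / 2 := by nlinarith [Nat.cast_nonneg (α := ℝ) i]
  set E := Real.exp (-((i : ℝ) / 16)) with hE
  have hE0 : 0 < E := Real.exp_pos _
  have hEmul : E * Real.exp (i / 16) = 1 := by rw [hE, ← Real.exp_add]; simp
  have hN'E : N * E ≤ N' := by
    calc N * E ≤ (Real.exp (i / 16) * N') * E := mul_le_mul_of_nonneg_right hN' hE0.le
      _ = (E * Real.exp (i / 16)) * N' := by ring
      _ = N' := by rw [hEmul, one_mul]
  have hpow : 2 * ((2 : ℝ) ^ i)⁻¹ ≤ 0.58 * E := by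
    have h1 := mul_le_mul_of_nonneg_left (two_mul_exp_le_two_pow i hi) hE0.le
    rw [← div_eq_mul_inv, div_le_iff₀ (by positivity)]
    nlinarith
  have hNE : u ^ 2 / 8 ≤ N * E := by
    have h1 : Real.exp (u / 2) ≤ N * E := by
      rw [hNu, hE, ← Real.exp_add]
      exact Real.exp_le_exp.2 (by linarith)
    have h2 := Real.quadratic_le_exp_of_nonneg (show 0 ≤ u / 2 by linarith)
    nlinarith
  have hKlog : K * Real.log (1 + 2 * ((2 : ℝ) ^ i)⁻¹) ≤ N * (0.58 * E) := by
    have h1 : Real.log (1 + 2 * ((2 : ℝ) ^ i)⁻¹) ≤ 0.58 * E := by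
      have := Real.log_le_sub_one_of_pos (by positivity : 0 < 1 + 2 * ((2 : ℝ) ^ i)⁻¹)
      linarith
    have hK' : (K : ℝ) ≤ N := by exact_mod_cast hK
    exact (mul_le_mul_of_nonneg_left h1 (Nat.cast_nonneg K)).trans
      (mul_le_mul_of_nonneg_right hK' (by positivity))
  rw [← Real.log_le_log_iff (by positivity) (by positivity), Real.log_mul (by positivity)
    (by positivity), Real.log_div (by positivity) (by positivity), Real.log_inv, Real.log_pow,
    Real.log_pow, Real.log_pow, ← hu]
  push_cast
  nlinarith

lemma le_div_of_two_pow_le {m r i : ℕ} (hr : (r : ℝ) ≤ 1 / 16384 * m)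
    (hi : (2 : ℝ) ^ i ≤ (binomLe m r : ℝ) ^ 2) : (i : ℝ) ≤ m / 400 := by
  have hm0 : (0 : ℝ) ≤ m := Nat.cast_nonneg m
  have hrm : r ≤ m := by
    have : (r : ℝ) ≤ m := by linarith
    exact_mod_cast this
  have h1 := binomLe_mul_pow_le m r hrm (((2 : ℝ) ^ 12)⁻¹) (by positivity) (by norm_num)
  have hpos : (0 : ℝ) < binomLe m r := by
    by_contra h
    have h0 : (binomLe m r : ℝ) = 0 := le_antisymm (not_lt.1 h) (Nat.cast_nonneg _)
    rw [h0] at hi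
    have : (0 : ℝ) < 2 ^ i := by positivity
    linarith
  have h2 := Real.log_le_log (by positivity) h1
  rw [Real.log_mul hpos.ne' (by positivity), Real.log_pow, Real.log_pow, Real.log_inv,
    Real.log_pow] at h2
  have h3 := Real.log_le_log (by positivity) hi
  rw [Real.log_pow, Real.log_pow] at h3
  have h4 := Real.log_le_sub_one_of_pos (by positivity : 0 < ((2 : ℝ) ^ 12)⁻¹ + 1)
  have h5 := mul_le_mul_of_nonneg_left h4 hm0
  have hlog2 := Real.log_two_gt_d9
  have hlog2' := Real.log_two_lt_d9
  push_cast at h2 h3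
  have h6 : (r : ℝ) * Real.log 2 ≤ 1 / 16384 * m * Real.log 2 :=
    mul_le_mul_of_nonneg_right hr (by linarith)
  have h7 : (i : ℝ) * Real.log 2 ≤ m / 400 * Real.log 2 := by
    norm_num at h5
    nlinarith
  exact le_of_mul_le_mul_right h7 (by linarith)

/-- contribution of medium-weight codewords.
There is an absolute constant `γ₀ > 0` such that for every `ε ∈ (0,1)` there is
`m₀` such that for all `m ≥ m₀`, all `1 ≤ r ≤ γ₀ m` and all integers
`2 ≤ i ≤ t` where `δ = binom(m,≤r)^{-2}` and `t = log₂(1/δ)`, setting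
`K = ⌊(1-ε)·binom(m,≤r)⌋`, the number `M_i` of polynomials `P ∈ RM(m,r)` with
`1/2 - 2^{-i} ≤ wt(P) ≤ 1/2 - 2^{-(i+1)}` satisfies
`M_i · (1/2 + 2^{-i})^K / 2^{binom(m,≤r) - K} ≤ δ³`. -/
theorem medium_weight_contribution :
    ∃ γ₀ : ℝ, 0 < γ₀ ∧
      ∀ ε : ℝ, 0 < ε → ε < 1 →
        ∃ m₀ : ℕ, ∀ m : ℕ, m₀ ≤ m →
          ∀ r : ℕ, 1 ≤ r → (r : ℝ) ≤ γ₀ * m →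
            ∀ δ : ℝ, δ = ((binomLe m r : ℝ) ^ 2)⁻¹ →
              ∀ i : ℕ, 2 ≤ i → (i : ℝ) ≤ Real.logb 2 (1 / δ) →
                ∀ K : ℕ, K = ⌊(1 - ε) * (binomLe m r : ℝ)⌋₊ →
                  (Nat.card {c : RMcode m r //
                        1 / 2 - ((2 : ℝ) ^ i)⁻¹ ≤ wt m r c ∧
                          wt m r c ≤ 1 / 2 - ((2 : ℝ) ^ (i + 1))⁻¹} : ℝ) *
                      (1 / 2 + ((2 : ℝ) ^ i)⁻¹) ^ K /
                        2 ^ (binomLe m r - K) ≤ δ ^ 3 := by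
  refine ⟨1 / 16384, by norm_num, fun ε hε0 hε1 => ⟨⌈Real.exp 600⌉₊, ?_⟩⟩
  intro m hm r hr hrm δ hδ i hi hit K hK
  have hmexp : Real.exp 600 ≤ m := Nat.ceil_le.1 hm
  have hm600 : (601 : ℝ) ≤ m := by
    have := Real.add_one_le_exp (600 : ℝ)
    linarith
  have hNm := succ_le_binomLe m r hr
  have hNm' : (m : ℝ) + 1 ≤ binomLe m r := by exact_mod_cast hNm
  have hN0 : (0 : ℝ) < binomLe m r := by linarith
  have hiN : (2 : ℝ) ^ i ≤ (binomLe m r : ℝ) ^ 2 := by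
    rw [hδ, one_div, inv_inv, Real.le_logb_iff_rpow_le (by norm_num) (by positivity),
      Real.rpow_natCast] at hit
    exact hit
  have hKN : K ≤ binomLe m r := by
    rw [hK]
    refine Nat.floor_le_of_le ?_
    nlinarith
  have him := le_div_of_two_pow_le hrm hiN
  have hi2 : (2 : ℝ) ≤ i := by exact_mod_cast hi
  have hr1 : (1 : ℝ) ≤ r := by exact_mod_cast hr
  obtain ⟨q, hq⟩ : ∃ q, q = m / (48 * r) := ⟨_, rfl⟩
  have hqle : 48 * r * q ≤ m := by rw [hq]; exact Nat.mul_div_le m _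
  have hqlt : m < 48 * r * q + 48 * r := by
    rw [hq]
    exact Nat.lt_mul_div_succ m (by omega)
  have hqR : 48 * (r : ℝ) * q ≤ m := by exact_mod_cast hqle
  have hqR' : 48 * (q : ℝ) ≤ m := by nlinarith [Nat.cast_nonneg (α := ℝ) q]
  obtain ⟨g, hg⟩ : ∃ g, g = q + 2 * i + 1 := ⟨_, rfl⟩
  have hgR : (g : ℝ) = q + 2 * i + 1 := by exact_mod_cast hg
  have har : 2 * (g + 64 * i + r) ≤ m := by
    have : (2 : ℝ) * (g + 64 * i + r) ≤ m := by
      rw [hgR]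
      linarith
    exact_mod_cast this
  obtain ⟨n, rfl⟩ : ∃ n, m = g + n + 64 * i := ⟨m - g - 64 * i, by omega⟩
  have hcard := card_wt_le_of_gap g n r i hr (by
    rw [hg] at hqlt ⊢
    nlinarith)
  have hexp : (binomLe (g + n + 64 * i) r : ℝ) ≤ Real.exp (i / 16) * binomLe n r := by
    have h1 := binomLe_le_exp_mul n (g + 64 * i) r (by omega)
    rw [show n + (g + 64 * i) = g + n + 64 * i by ring] at h1
    refine h1.trans (mul_le_mul_of_nonneg_right (Real.exp_le_exp.2 ?_) (Nat.cast_nonneg _))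
    rw [div_le_div_iff₀ (by linarith) (by norm_num)]
    have h2 : ((g + 64 * i : ℕ) : ℝ) = q + 66 * i + 1 := by
      push_cast
      linarith
    rw [h2]
    have h3 := mul_le_mul_of_nonneg_left hrm (by linarith : (0 : ℝ) ≤ i)
    nlinarith
  have hfin := mul_div_le_inv_pow_six (hmexp.trans (by linarith)) hNm hKN hi hiN hexp
  generalize g + n + 64 * i = m at *
  have hhalf : (1 / 2 + ((2 : ℝ) ^ i)⁻¹) ^ K = (1 + 2 * ((2 : ℝ) ^ i)⁻¹) ^ K / 2 ^ K := by
    rw [← div_pow]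
    congr 1
    ring
  have hsplit : (2 : ℝ) ^ binomLe m r = 2 ^ K * 2 ^ (binomLe m r - K) := by
    rw [← pow_add, Nat.add_sub_cancel' hKN]
  have hδ3 : δ ^ 3 = ((binomLe m r : ℝ) ^ 6)⁻¹ := by rw [hδ, inv_pow, ← pow_mul]
  rw [hδ3, hhalf, ← mul_div_assoc, div_div, ← hsplit, div_le_iff₀ (by positivity)]
  refine (mul_le_mul_of_nonneg_right hcard (by positivity)).trans ?_
  calc _ = 2 ^ binomLe m r * (((m : ℝ) + 2) / 2 ^ binomLe n r *
        (1 + 2 * ((2 : ℝ) ^ i)⁻¹) ^ K) := by ring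
    _ ≤ 2 ^ binomLe m r * ((binomLe m r : ℝ) ^ 6)⁻¹ :=
        mul_le_mul_of_nonneg_left hfin (by positivity)
    _ = _ := by ring
end
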